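/- Let R be a commutative noetherian ring with identity, let a be an ideal of R, and let M be an a-torsion R-module (every element of M is annihilated by some power of a) whose support dimension satisfies dim_R M ≤ 2. Then M is a-cofinite if and only if the R-modules Hom_R(R/a, M), Ext^1_R(R/a, M) and Ext^2_R(R/a, M) are all finitely generated. -/

import Mathlib

universe u

open CategoryTheory

/-- `Ext^i_R(R/a, M)` as an `R`-module, for `M : ModuleCat R`. -/
noncomputable def extQuot {R : Type u} [CommRing R] (a : Ideal R) (i : ℕ)
    (M : ModuleCat.{u} R) : ModuleCat.{u} R :=
  ((Ext R (ModuleCat.{u} R) i).obj (Opposite.op (ModuleCat.of R (R ⧸ a)))).obj M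

/-- An `R`-module `M` is `a`-cofinite if `Supp M ⊆ V(a)` and `Ext^i_R(R/a, M)` is a
finitely generated `R`-module for every `i ≥ 0`. -/
def IsCofinite {R : Type u} [CommRing R] (a : Ideal R) (M : ModuleCat.{u} R) : Prop :=
  Module.support R M ⊆ PrimeSpectrum.zeroLocus (a : Set R) ∧
    ∀ i : ℕ, Module.Finite R (extQuot a i M)

section extLink
variable {R : Type u} [CommRing R]

lemma exact_cyc (K : CochainComplex (ModuleCat.{u} R) ℕ) (i j : ℕ)
    (hj : (ComplexShape.up ℕ).next i = j) :
    Function.Exact (K.iCycles i) (K.d i j) := by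
  let S : ShortComplex (ModuleCat.{u} R) := ShortComplex.mk (K.iCycles i) (K.d i j) (by simp)
  exact (ShortComplex.ShortExact.moduleCat_exact_iff_function_exact S).1
    (ShortComplex.exact_of_f_is_kernel S (K.cyclesIsKernel i j hj))

lemma exact_hom (K : CochainComplex (ModuleCat.{u} R) ℕ) (i j : ℕ)
    (hj : (ComplexShape.up ℕ).prev j = i) :
    Function.Exact (K.toCycles i j) (K.homologyπ j) := by
  let S : ShortComplex (ModuleCat.{u} R) := ShortComplex.mk (K.toCycles i j) (K.homologyπ j) (by simp)
  exact (ShortComplex.ShortExact.moduleCat_exact_iff_function_exact S).1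
    (ShortComplex.exact_of_g_is_cokernel S (K.homologyIsCokernel i j hj))

lemma oldExt_finite_iff_succ (X Y : ModuleCat.{u} R) (n : ℕ) :
    Module.Finite R (((Ext R (ModuleCat.{u} R) (n+1)).obj (Opposite.op X)).obj Y) ↔
      Module.Finite R (Abelian.Ext X Y (n+1)) := by
  have P := projectiveResolution X
  let K := P.complex.linearYonedaObj R Y
  have e := (P.isoExt (R := R) (n+1) Y).toLinearEquiv
  let ι : K.cycles (n+1) →ₗ[R] (P.complex.X (n+1) ⟶ Y) := (K.iCycles (n+1)).hom
  have hcyc : ∀ c : K.cycles (n+1), P.complex.d (n+2) (n+1) ≫ ι c = 0 := by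
    intro c
    have := ConcreteCategory.congr_hom (K.iCycles_d (n+1) (n+2)) c
    exact this
  let ψ : K.cycles (n+1) →ₗ[R] Abelian.Ext X Y (n+1) :=
    { toFun := fun c => P.extMk (ι c) (n+2) rfl (hcyc c)
      map_add' := by
        intro c c'
        rw [P.add_extMk]
        congr 1
        exact map_add ι c c'
      map_smul' := by
        intro r c
        have h1 : ι (r • c) =
          (ι c) ≫ (r • 𝟙 Y) := by
          rw [Linear.comp_smul, Category.comp_id]
          exact map_smul ι r c
        simp only [RingHom.id_apply]
        rw [Abelian.Ext.smul_eq_comp_mk₀, P.extMk_comp_mk₀]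
        congr 1 }
  have hψs : Function.Surjective ψ := by
    intro α
    obtain ⟨f, hf, rfl⟩ := P.extMk_surjective α (n+2) rfl
    obtain ⟨c, hc⟩ := exact_cyc K (n+1) (n+2) (by simp) f |>.1 hf
    refine ⟨c, ?_⟩
    change P.extMk (ι c) (n+2) rfl (hcyc c) = _
    congr 1
  have hπ : Function.Surjective (K.homologyπ (n+1)) :=
    (ModuleCat.epi_iff_surjective _).1 inferInstance
  have hker : LinearMap.ker ψ = LinearMap.ker (K.homologyπ (n+1)).hom := by
    ext c
    rw [LinearMap.mem_ker, LinearMap.mem_ker]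
    have := (P.extMk_eq_zero_iff (ι c) (n+2) rfl (hcyc c) n rfl)
    refine Iff.trans this ?_
    have hinj : Function.Injective (K.iCycles (n+1)) := (ModuleCat.mono_iff_injective _).1 inferInstance
    have hex := exact_hom K n (n+1) (by simp) c
    refine Iff.trans ?_ hex.symm
    constructor
    · rintro ⟨g, hg⟩
      refine ⟨g, hinj ?_⟩
      refine Eq.trans ?_ hg
      exact ConcreteCategory.congr_hom (K.toCycles_i n (n+1)) g
    · rintro ⟨g, hg⟩
      refine ⟨g, ?_⟩
      have h2 := ConcreteCategory.congr_hom (K.toCycles_i n (n+1)) g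
      refine Eq.trans h2.symm ?_
      exact congrArg (K.iCycles (n+1)) hg
  have e2 : K.homology (n+1) ≃ₗ[R] Abelian.Ext X Y (n+1) :=
    ((K.homologyπ (n+1)).hom.quotKerEquivOfSurjective hπ).symm.trans
      ((Submodule.quotEquivOfEq _ _ hker.symm).trans (ψ.quotKerEquivOfSurjective hψs))
  exact Module.Finite.equiv_iff (e.trans e2)

lemma oldExt_finite_iff_zero (X Y : ModuleCat.{u} R)  :
    Module.Finite R (((Ext R (ModuleCat.{u} R) 0).obj (Opposite.op X)).obj Y) ↔
      Module.Finite R (Abelian.Ext X Y 0) := by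
  have P := projectiveResolution X
  let K := P.complex.linearYonedaObj R Y
  have e := (P.isoExt (R := R) 0 Y).toLinearEquiv
  have e1 : (X ⟶ Y) ≃ₗ[R] K.cycles 0 := by
    let φ : (X ⟶ Y) →ₗ[R] (P.complex.X 0 ⟶ Y) := Linear.leftComp R Y (P.π.f 0 : P.complex.X 0 ⟶ X)
    have hφi : Function.Injective φ := by
      intro f g h
      have : Epi (P.π.f 0) := inferInstance
      exact (cancel_epi (P.π.f 0)).1 h
    have hinj : Function.Injective (K.iCycles 0) := (ModuleCat.mono_iff_injective _).1 inferInstance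
    have hex := exact_cyc K 0 1 (by simp)
    let ι : K.cycles 0 →ₗ[R] (P.complex.X 0 ⟶ Y) := (K.iCycles 0).hom
    have hr : LinearMap.range φ = LinearMap.range ι := by
      ext f
      refine Iff.trans ?_ (hex f)
      constructor
      · rintro ⟨g, rfl⟩
        change P.complex.d 1 0 ≫ P.π.f 0 ≫ g = 0
        have : P.complex.d 1 0 ≫ P.π.f 0 = 0 := P.complex_d_comp_π_f_zero
        exact (Category.assoc (P.complex.d 1 0) (P.π.f 0) g).symm.trans
          ((congrArg (· ≫ g) this).trans Limits.zero_comp)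
      · intro hf
        have hf' : P.complex.d 1 0 ≫ (f : P.complex.X 0 ⟶ Y) = 0 := hf
        exact ⟨P.exact₀.desc f hf', P.exact₀.g_desc f hf'⟩
    exact (LinearEquiv.ofInjective φ hφi).trans ((LinearEquiv.ofEq _ _ hr).trans 
      (LinearEquiv.ofInjective ι hinj).symm)
  have hi : IsIso (K.homologyπ 0) := K.isIso_homologyπ 0 0 (by simp) (by
      exact K.shape _ _ (by simp))
  have e2 := (asIso (K.homologyπ 0)).toLinearEquiv
  exact Module.Finite.equiv_iff (e.trans (e2.symm.trans (e1.symm.trans (Abelian.Ext.linearEquiv₀).symm)))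

lemma extQuot_finite_iff (a : Ideal R) (M : ModuleCat.{u} R) (i : ℕ) :
    Module.Finite R (extQuot a i M) ↔ 
      Module.Finite R (Abelian.Ext (ModuleCat.of R (R ⧸ a)) M i) := by
  cases i with
  | zero => exact oldExt_finite_iff_zero _ _
  | succ n => exact oldExt_finite_iff_succ _ _ n
end extLink

section extD2
variable {R : Type u} [CommRing R]

/-- the elements killed by `a` -/
def annSub (a : Ideal R) (N : Type u) [AddCommGroup N] [Module R N] : Submodule R N where
  carrier := {x | ∀ r ∈ a, r • x = 0}
  add_mem' := by
    intro x y hx hy r hr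
    rw [smul_add, hx r hr, hy r hr, add_zero]
  zero_mem' := fun r _ => smul_zero r
  smul_mem' := by
    intro c x hx r hr
    rw [smul_comm, hx r hr, smul_zero]

lemma mem_annSub {a : Ideal R} {N : Type u} [AddCommGroup N] [Module R N] {x : N} :
    x ∈ annSub a N ↔ ∀ r ∈ a, r • x = 0 := Iff.rfl

/-- `Ext^s(R/a, N)` -/
noncomputable abbrev EE (a : Ideal R) (s : ℕ) (N : Type u) [AddCommGroup N] [Module R N] : Type u :=
  Abelian.Ext (ModuleCat.of R (R ⧸ a)) (ModuleCat.of R N) s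

section
variable {A B C : Type u} [AddCommGroup A] [Module R A] [AddCommGroup B] [Module R B]
  [AddCommGroup C] [Module R C] (a : Ideal R) (f : A →ₗ[R] B) (g : B →ₗ[R] C)

/-- functoriality -/
noncomputable def EEmap (s : ℕ) : EE a s A →ₗ[R] EE a s B :=
  (Abelian.Ext.mk₀ (ModuleCat.ofHom f)).postcompOfLinear R (ModuleCat.of R (R ⧸ a)) (add_zero s)

lemma EE_les (hf : Function.Injective f) (hg : Function.Surjective g) (hfg : Function.Exact f g) (s : ℕ) :
    Function.Exact (EEmap a f s) (EEmap a g s) ∧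
    ∃ δ : EE a s C →ₗ[R] EE a (s+1) A, Function.Exact (EEmap a g s) δ ∧ 
      Function.Exact δ (EEmap a f (s+1)) := by
  let S : ShortComplex (ModuleCat.{u} R) := ShortComplex.mk (ModuleCat.ofHom f) (ModuleCat.ofHom g)
    (by ext x; exact hfg.apply_apply_eq_zero x)
  have hS : S.ShortExact := by
    have hm : Mono S.f := (ModuleCat.mono_iff_injective _).2 hf
    have he : Epi S.g := (ModuleCat.epi_iff_surjective _).2 hg
    exact ⟨(ShortComplex.ShortExact.moduleCat_exact_iff_function_exact S).2 hfg⟩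
  refine ⟨?_, hS.extClass.postcompOfLinear R _ rfl, ?_, ?_⟩
  · exact (ShortComplex.ab_exact_iff_function_exact _).1 (Abelian.Ext.covariant_sequence_exact₂' _ hS s)
  · exact (ShortComplex.ab_exact_iff_function_exact _).1 (Abelian.Ext.covariant_sequence_exact₃' _ hS s _ rfl)
  · exact (ShortComplex.ab_exact_iff_function_exact _).1 (Abelian.Ext.covariant_sequence_exact₁' _ hS s _ rfl)

/-- elements killed by `a` give `Ext^0` -/
noncomputable def annHom (C : Type u) [AddCommGroup C] [Module R C] : annSub a C →ₗ[R] (R ⧸ a →ₗ[R] C) where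
  toFun c := Submodule.liftQ a (LinearMap.toSpanSingleton R C c.1) (by
    intro r hr
    exact c.2 r hr)
  map_add' := by
    intro x y
    apply Submodule.linearMap_qext
    ext
    change (1:R) • (x.1 + y.1) = (1:R) • x.1 + (1:R) • y.1
    rw [smul_add]
  map_smul' := by
    intro r y
    apply Submodule.linearMap_qext
    ext
    change (1:R) • (r • y.1) = r • ((1:R) • y.1)
    rw [one_smul, one_smul]

noncomputable def annEE (C : Type u) [AddCommGroup C] [Module R C] : annSub a C →ₗ[R] EE a 0 C :=
  (Abelian.Ext.linearEquiv₀ (R := R) (X := ModuleCat.of R (R ⧸ a)) (Y := ModuleCat.of R C)).symm.toLinearMap ∘ₗ 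
    (ModuleCat.homLinearEquiv (S := R) (M := ModuleCat.of R (R ⧸ a)) (N := ModuleCat.of R C)).symm.toLinearMap
     ∘ₗ annHom a C

lemma annHom_bij (C : Type u) [AddCommGroup C] [Module R C] : Function.Bijective (annHom a C) := by
  constructor
  · intro x y h
    have := LinearMap.congr_fun h (Submodule.Quotient.mk 1)
    have h2 : (1:R) • x.1 = (1:R) • y.1 := this
    rw [one_smul, one_smul] at h2
    exact Subtype.ext h2
  · intro h
    refine ⟨⟨h (Submodule.Quotient.mk 1), ?_⟩, ?_⟩
    · intro r hr
      rw [← map_smul, ← Submodule.Quotient.mk_smul]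
      have : (Submodule.Quotient.mk (r • 1) : R ⧸ a) = 0 := by
        rw [Submodule.Quotient.mk_eq_zero]; simpa using hr
      rw [this, map_zero]
    · apply Submodule.linearMap_qext
      ext
      change (1:R) • (h (Submodule.Quotient.mk 1)) = h (Submodule.Quotient.mk 1)
      rw [one_smul]

lemma annEE_bij (C : Type u) [AddCommGroup C] [Module R C] : Function.Bijective (annEE a C) := by
  unfold annEE
  simp only [LinearMap.coe_comp, LinearEquiv.coe_coe]
  exact (LinearEquiv.bijective _).comp ((LinearEquiv.bijective _).comp (annHom_bij a C))

lemma annEE_map (b : annSub a B) (c : annSub a C) (h : g b = c) : EEmap a g 0 (annEE a B b) = annEE a C c := by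
  change Abelian.Ext.comp (Abelian.Ext.mk₀ _) (Abelian.Ext.mk₀ _) (add_zero 0) = Abelian.Ext.mk₀ _
  rw [Abelian.Ext.mk₀_comp_mk₀]
  congr 1
  apply ModuleCat.hom_ext
  apply Submodule.linearMap_qext
  ext
  change g ((1:R) • b.1) = (1:R) • c.1
  rw [one_smul, one_smul, h]

lemma EE_les0 (hf : Function.Injective f) (hg : Function.Surjective g) (hfg : Function.Exact f g) :
    ∃ δ : annSub a C →ₗ[R] EE a 1 A, (∀ c, δ c = 0 ↔ ∃ b ∈ annSub a B, g b = c) ∧ 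
      Function.Exact δ (EEmap a f 1) := by
  obtain ⟨-, δ, h1, h2⟩ := EE_les a f g hf hg hfg 0
  refine ⟨δ ∘ₗ annEE a C, ?_, ?_⟩
  · intro c
    rw [LinearMap.comp_apply]
    refine (h1 _).trans ?_
    constructor
    · rintro ⟨y, hy⟩
      obtain ⟨b, rfl⟩ := (annEE_bij a B).2 y
      refine ⟨b.1, b.2, ?_⟩
      have : g b.1 ∈ annSub a C := by
        intro r hr
        rw [← map_smul, b.2 r hr, map_zero]
      rw [annEE_map a g b ⟨_, this⟩ rfl] at hy
      exact congrArg Subtype.val ((annEE_bij a C).1 hy)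
    · rintro ⟨b, hb, h⟩
      exact ⟨annEE a B ⟨b, hb⟩, annEE_map a g ⟨b,hb⟩ c h⟩
  · intro y
    rw [h2 y]
    constructor
    · rintro ⟨z, rfl⟩
      obtain ⟨c, rfl⟩ := (annEE_bij a C).2 z
      exact ⟨c, rfl⟩
    · rintro ⟨c, rfl⟩
      exact ⟨_, rfl⟩
end

/-- acyclic -/
def Acyc (a : Ideal R) (N : Type u) [AddCommGroup N] [Module R N] : Prop :=
  ∀ s : ℕ, Subsingleton (EE a (s+1) N)

lemma acyc_of_injective (a : Ideal R) (N : ModuleCat.{u} R) [Injective N] : Acyc a N := by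
  intro s
  exact Abelian.Ext.subsingleton_of_injective _ N s

lemma EE_equiv (a : Ideal R) {N N' : Type u} [AddCommGroup N] [Module R N] [AddCommGroup N'] [Module R N']
    (e : N ≃ₗ[R] N') (s : ℕ) : Nonempty (EE a s N ≃ₗ[R] EE a s N') := by
  have h : ∀ {N N' : Type u} [AddCommGroup N] [Module R N] [AddCommGroup N'] [Module R N']
    (e : N ≃ₗ[R] N') (x : EE a s N), EEmap a e.symm.toLinearMap s (EEmap a e.toLinearMap s x) = x := by
    intro N N' _ _ _ _ e x
    change Abelian.Ext.comp (Abelian.Ext.comp _ (Abelian.Ext.mk₀ _) (add_zero s)) (Abelian.Ext.mk₀ _) (add_zero s) = _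
    rw [Abelian.Ext.comp_assoc_of_third_deg_zero, Abelian.Ext.mk₀_comp_mk₀]
    have : ModuleCat.ofHom e.toLinearMap ≫ ModuleCat.ofHom e.symm.toLinearMap = 𝟙 _ := by
      ext x; simp
    rw [this, Abelian.Ext.comp_mk₀_id]
  refine ⟨LinearEquiv.ofLinearMap (EEmap a e.toLinearMap s) (EEmap a e.symm.toLinearMap s) ?_ ?_⟩
  · ext x : 1
    exact h e.symm x
  · ext x : 1
    exact h e x

lemma acyc_equiv (a : Ideal R) {N N' : Type u} [AddCommGroup N] [Module R N] [AddCommGroup N'] [Module R N']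
    (e : N ≃ₗ[R] N') (h : Acyc a N) : Acyc a N' := by
  intro s
  obtain ⟨e'⟩ := EE_equiv a e (s+1)
  have := h s
  exact e'.symm.toEquiv.subsingleton

lemma acyc_prod (a : Ideal R) {N N' : Type u} [AddCommGroup N] [Module R N] [AddCommGroup N'] [Module R N']
    (h : Acyc a N) (h' : Acyc a N') : Acyc a (N × N') := by
  intro s
  obtain ⟨h1, -⟩ := EE_les a (LinearMap.inl R N N') (LinearMap.snd R N N') LinearMap.inl_injective 
    LinearMap.snd_surjective (Function.Exact.inl_snd) (s+1)
  have := h s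
  have := h' s
  refine subsingleton_of_forall_eq 0 fun y => ?_
  obtain ⟨x, rfl⟩ := (h1 y).1 (Subsingleton.elim _ _)
  rw [Subsingleton.elim x 0, map_zero]

lemma EE_finite [IsNoetherianRing R] (a : Ideal R) {N : Type u} [AddCommGroup N] [Module R N] [Module.Finite R N] (s : ℕ) :
    Module.Finite R (EE a s N) := by
  infer_instance

end extD2

section cxD3

/-- subquotient `Z / B` -/
abbrev SQ {R : Type u} [CommRing R] {T : Type u} [AddCommGroup T] [Module R T]
    (Z B : Submodule R T) : Type u := ↥Z ⧸ B.submoduleOf Z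

section SQ
variable {R : Type u} [CommRing R]
variable {T T' T'' : Type u} [AddCommGroup T] [Module R T] [AddCommGroup T'] [Module R T']
  [AddCommGroup T''] [Module R T'']

/-- map on subquotients -/
def SQmap (Z B : Submodule R T) (Z' B' : Submodule R T') (φ : T →ₗ[R] T')
    (hZ : ∀ z ∈ Z, φ z ∈ Z') (hB : ∀ z ∈ B, φ z ∈ B') : SQ Z B →ₗ[R] SQ Z' B' :=
  Submodule.mapQ _ _ (φ.restrict hZ) (by
    intro z hz
    exact hB _ hz)

lemma SQ_mk_eq_zero {Z B : Submodule R T} (z : Z) : (Submodule.Quotient.mk z : SQ Z B) = 0 ↔ z.1 ∈ B := by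
  rw [Submodule.Quotient.mk_eq_zero]
  exact Iff.rfl

lemma SQ_exact (Z B : Submodule R T) (Z' B' : Submodule R T') (Z'' B'' : Submodule R T'')
    (φ : T →ₗ[R] T') (hZ : ∀ z ∈ Z, φ z ∈ Z') (hB : ∀ z ∈ B, φ z ∈ B')
    (ψ : T' →ₗ[R] T'') (hZ' : ∀ z ∈ Z', ψ z ∈ Z'') (hB' : ∀ z ∈ B', ψ z ∈ B'')
    (h1 : ∀ z ∈ Z, ψ (φ z) ∈ B'')
    (h2 : ∀ z ∈ Z', ψ z ∈ B'' → ∃ y ∈ Z, z - φ y ∈ B') :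
    Function.Exact (SQmap Z B Z' B' φ hZ hB) (SQmap Z' B' Z'' B'' ψ hZ' hB') := by
  intro q
  obtain ⟨z, rfl⟩ := Submodule.Quotient.mk_surjective _ q
  constructor
  · intro h
    have h' : ψ z.1 ∈ B'' := (SQ_mk_eq_zero (B := B'') (ψ.restrict hZ' z)).1 h
    obtain ⟨y, hy, hyz⟩ := h2 z.1 z.2 h'
    refine ⟨Submodule.Quotient.mk ⟨y, hy⟩, ?_⟩
    symm
    rw [← sub_eq_zero]
    exact (SQ_mk_eq_zero (B := B') (z - φ.restrict hZ ⟨y, hy⟩)).2 hyz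
  · rintro ⟨p, hp⟩
    obtain ⟨y, rfl⟩ := Submodule.Quotient.mk_surjective _ p
    rw [← hp]
    exact (SQ_mk_eq_zero (B := B'') (ψ.restrict hZ' (φ.restrict hZ y))).2 (h1 y.1 y.2)
end SQ

/-- A complex presented by submodules of one module. -/
structure Cx (R : Type u) [CommRing R] where
  T : Type u
  [ag : AddCommGroup T]
  [md : Module R T]
  d : T →ₗ[R] T
  X : ℤ → Submodule R T
  dd : ∀ t, d (d t) = 0
  dX : ∀ i t, t ∈ X i → d t ∈ X (i+1)

attribute [instance] Cx.ag Cx.md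

variable {R : Type u} [CommRing R]

namespace Cx
/-- cocycles -/
def Z (J : Cx R) (i : ℤ) : Submodule R J.T := LinearMap.ker J.d ⊓ J.X i
/-- coboundaries -/
def B (J : Cx R) (i : ℤ) : Submodule R J.T := (J.X (i-1)).map J.d
/-- cohomology -/
abbrev H (J : Cx R) (i : ℤ) : Type u := SQ (J.Z i) (J.B i)

lemma mem_Z {J : Cx R} {i : ℤ} {t : J.T} : t ∈ J.Z i ↔ J.d t = 0 ∧ t ∈ J.X i := Iff.rfl
lemma mem_B {J : Cx R} {i : ℤ} {t : J.T} : t ∈ J.B i ↔ ∃ s ∈ J.X (i-1), J.d s = t := Iff.rfl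
lemma B_le_Z (J : Cx R) (i : ℤ) : J.B i ≤ J.Z i := by
  rintro _ ⟨s, hs, rfl⟩
  refine ⟨J.dd s, ?_⟩
  have := J.dX _ _ hs
  rwa [sub_add_cancel] at this

/-- Koszul cone -/
def K (x : R) (J : Cx R) : Cx R where
  T := J.T × J.T
  d := (J.d ∘ₗ LinearMap.fst R _ _).prod (x • LinearMap.fst R _ _ - J.d ∘ₗ LinearMap.snd R _ _)
  X i := (J.X i).prod (J.X (i-1))
  dd := by
    rintro ⟨u, v⟩
    simp [J.dd]
  dX := by
    rintro i ⟨u, v⟩ ⟨hu, hv⟩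
    refine ⟨J.dX _ _ hu, ?_⟩
    have := J.dX _ _ hv
    rw [sub_add_cancel] at this
    rw [add_sub_cancel_right]
    exact sub_mem ((J.X i).smul_mem x hu) this

lemma K_d (x : R) (J : Cx R) (p : J.T × J.T) : (K x J).d p = (J.d p.1, x • p.1 - J.d p.2) := rfl
lemma K_X (x : R) (J : Cx R) (i : ℤ) (p : J.T × J.T) : p ∈ (K x J).X i ↔ p.1 ∈ J.X i ∧ p.2 ∈ J.X (i-1) := Iff.rfl

/-- `H^{i-1}(J) → H^i(K)` -/
def kin (x : R) (J : Cx R) (i : ℤ) : J.H (i-1) →ₗ[R] (K x J).H i :=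
  SQmap (J.Z (i-1)) (J.B (i-1)) ((K x J).Z i) ((K x J).B i) (LinearMap.inr R J.T J.T) (by
    rintro z ⟨hz, hz'⟩
    refine ⟨?_, zero_mem _, hz'⟩
    have hz0 : J.d z = 0 := hz
    change ((J.d 0, x • 0 - J.d z) : J.T × J.T) = 0
    rw [hz0]; simp) (by
    rintro _ ⟨v, hv, rfl⟩
    refine ⟨(0, -v), ⟨zero_mem _, neg_mem hv⟩, ?_⟩
    change ((J.d 0, x • 0 - J.d (-v)) : J.T × J.T) = (0, J.d v)
    simp)

/-- `H^i(K) → H^i(J)` -/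
def kout (x : R) (J : Cx R) (i : ℤ) : (K x J).H i →ₗ[R] J.H i :=
  SQmap ((K x J).Z i) ((K x J).B i) (J.Z i) (J.B i)  (LinearMap.fst R J.T J.T) (by
    rintro ⟨u, v⟩ ⟨hz, hu, hv⟩
    have h : ((J.d u, x • u - J.d v) : J.T × J.T) = 0 := hz
    exact ⟨congrArg Prod.fst h, hu⟩) (by
    rintro _ ⟨⟨u, v⟩, ⟨hu, hv⟩, rfl⟩
    exact ⟨u, hu, rfl⟩)

/-- multiplication by `x` on cohomology -/
def mulx (x : R) (J : Cx R) (i : ℤ) : J.H i →ₗ[R] J.H i :=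
  SQmap (J.Z i) (J.B i) (J.Z i) (J.B i) (x • LinearMap.id) (fun z hz => (J.Z i).smul_mem x hz)
    (fun z hz => (J.B i).smul_mem x hz)

lemma mulx_apply (x : R) (J : Cx R) (i : ℤ) (q : J.H i) : mulx x J i q = x • q := by
  obtain ⟨z, rfl⟩ := Submodule.Quotient.mk_surjective _ q
  rfl

lemma exact1 (x : R) (J : Cx R) (i : ℤ) : Function.Exact (mulx x J (i-1)) (kin x J i) := by
  apply SQ_exact
  · rintro z ⟨hz, hz'⟩
    have hz0 : J.d z = 0 := hz
    refine ⟨(z, 0), ⟨hz', zero_mem _⟩, ?_⟩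
    change ((J.d z, x • z - J.d 0) : J.T × J.T) = (0, x • z)
    rw [hz0]; simp
  · rintro z ⟨hz, hz'⟩ ⟨⟨u, v⟩, ⟨hu, hv⟩, h⟩
    have h' : ((J.d u, x • u - J.d v) : J.T × J.T) = (0, z) := h
    rw [Prod.mk.injEq] at h'
    refine ⟨u, ⟨h'.1, hu⟩, ⟨-v, neg_mem hv, ?_⟩⟩
    rw [← h'.2]
    simp

lemma exact2 (x : R) (J : Cx R) (i : ℤ) : Function.Exact (kin x J i) (kout x J i) := by
  apply SQ_exact
  · rintro z hz
    exact zero_mem _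
  · rintro ⟨u, v⟩ ⟨hz, hu, hv⟩ ⟨w, hw, h⟩
    have h0 : ((J.d u, x • u - J.d v) : J.T × J.T) = 0 := hz
    have h' : J.d w = u := h
    have h0' : x • u - J.d v = 0 := congrArg Prod.snd h0
    refine ⟨v - x • w, ⟨?_, sub_mem hv ((J.X _).smul_mem x hw)⟩, ?_⟩
    · change J.d (v - x • w) = 0
      rw [map_sub, map_smul, h', ← neg_sub, h0', neg_zero]
    · refine ⟨(w, 0), ⟨hw, zero_mem _⟩, ?_⟩
      refine Prod.ext ?_ ?_
      · change J.d w = u - 0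
        rw [h', sub_zero]
      · change x • w - J.d 0 = v - (v - x • w)
        simp

lemma exact3 (x : R) (J : Cx R) (i : ℤ) : Function.Exact (kout x J i) (mulx x J i) := by
  apply SQ_exact
  · rintro ⟨u, v⟩ ⟨hz, hu, hv⟩
    have h0 : ((J.d u, x • u - J.d v) : J.T × J.T) = 0 := hz
    have h0' : x • u - J.d v = 0 := congrArg Prod.snd h0
    exact ⟨v, hv, (sub_eq_zero.1 h0').symm⟩
  · rintro u ⟨hz, hu⟩ ⟨v, hv, h⟩
    have h' : J.d v = x • u := h
    have hz0 : J.d u = 0 := hz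
    refine ⟨(u, v), ⟨?_, hu, hv⟩, ?_⟩
    · change ((J.d u, x • u - J.d v) : J.T × J.T) = 0
      rw [h', hz0]; simp
    · change u - u ∈ _
      rw [sub_self]
      exact zero_mem _

/-- null-homotopic scalars -/
def NH (J : Cx R) (y : R) : Prop :=
  ∃ s : J.T →ₗ[R] J.T, (∀ i, ∀ t ∈ J.X i, s t ∈ J.X (i-1)) ∧ ∀ t, J.d (s t) + s (J.d t) = y • t

lemma NH_K_self (x : R) (J : Cx R) : NH (K x J) x := by
  refine ⟨LinearMap.inl R J.T J.T ∘ₗ LinearMap.snd R J.T J.T, ?_, ?_⟩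
  · rintro i ⟨u, v⟩ ⟨hu, hv⟩
    exact ⟨hv, zero_mem _⟩
  · rintro ⟨u, v⟩
    refine Prod.ext ?_ ?_
    · change J.d v + (x • u - J.d v) = x • u
      simp
    · change (x • v - J.d 0) + 0 = x • v
      simp

lemma NH_K (x y : R) (J : Cx R) (h : NH J y) : NH (K x J) y := by
  obtain ⟨s, h1, h2⟩ := h
  refine ⟨s.prodMap (-s), ?_, ?_⟩
  · rintro i ⟨u, v⟩ ⟨hu, hv⟩
    exact ⟨h1 _ _ hu, neg_mem (h1 _ _ hv)⟩
  · rintro ⟨u, v⟩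
    refine Prod.ext ?_ ?_
    · exact h2 u
    · change (x • s u - J.d (- s v)) + - s (x • u - J.d v) = y • v
      rw [← h2 v]
      simp only [map_neg, map_sub, map_smul]
      abel

lemma NH_span (J : Cx R) (S : Set R) (h : ∀ y ∈ S, NH J y) : ∀ y ∈ Ideal.span S, NH J y := by
  intro y hy
  induction hy using Submodule.span_induction with
  | mem x hx => exact h x hx
  | zero => exact ⟨0, fun i t _ => zero_mem _, fun t => by simp⟩
  | add x y _ _ hx hy =>
    obtain ⟨s, h1, h2⟩ := hx
    obtain ⟨s', h1', h2'⟩ := hy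
    refine ⟨s + s', fun i t ht => add_mem (h1 i t ht) (h1' i t ht), fun t => ?_⟩
    rw [add_smul, ← h2, ← h2']
    simp
    abel
  | smul c x _ hx =>
    obtain ⟨s, h1, h2⟩ := hx
    refine ⟨c • s, fun i t ht => (J.X _).smul_mem c (h1 i t ht), fun t => ?_⟩
    rw [smul_assoc, ← h2]
    simp

lemma NH_smul (J : Cx R) (y : R) (h : NH J y) (i : ℤ) (q : J.H i) : y • q = 0 := by
  obtain ⟨s, h1, h2⟩ := h
  obtain ⟨z, rfl⟩ := Submodule.Quotient.mk_surjective _ q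
  refine (SQ_mk_eq_zero (B := J.B i) (y • z)).2 ?_
  refine ⟨s z.1, h1 _ _ z.2.2, ?_⟩
  have h0 : J.d z.1 = 0 := z.2.1
  have := h2 z.1
  rw [h0, map_zero, add_zero] at this
  exact this

/-- the subcomplex killed by `a` -/
def res (a : Ideal R) (J : Cx R) : Cx R where
  T := J.T
  d := J.d
  X i := J.X i ⊓ annSub a J.T
  dd := J.dd
  dX := by
    rintro i t ⟨h1, h2⟩
    refine ⟨J.dX _ _ h1, ?_⟩
    intro r hr
    rw [← map_smul, h2 r hr, map_zero]

lemma res_K (a : Ideal R) (x : R) (J : Cx R) : res a (K x J) = K x (res a J) := by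
  unfold res K
  congr 1
  funext i
  ext ⟨u, v⟩
  constructor
  · rintro ⟨⟨h1, h2⟩, h3⟩
    exact ⟨⟨h1, fun r hr => congrArg Prod.fst (h3 r hr)⟩, ⟨h2, fun r hr => congrArg Prod.snd (h3 r hr)⟩⟩
  · rintro ⟨⟨h1, h2⟩, h3, h4⟩
    exact ⟨⟨h1, h3⟩, fun r hr => Prod.ext (h2 r hr) (h4 r hr)⟩

lemma res_smul (a : Ideal R) (J : Cx R) (y : R) (h : y ∈ a) (i : ℤ) (q : (res a J).H i) : y • q = 0 := by
  obtain ⟨z, rfl⟩ := Submodule.Quotient.mk_surjective _ q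
  refine (SQ_mk_eq_zero (B := (res a J).B i) (y • z)).2 ?_
  have : (y • z).1 = 0 := z.2.2.2 y h
  rw [this]
  exact zero_mem _

/-- iterated cone -/
def Y (J : Cx R) : List R → Cx R
  | [] => J
  | x :: l => K x (Y J l)

end Cx
end cxD3

section cxD4
variable {R : Type u} [CommRing R]

lemma finite_of_exact [IsNoetherianRing R] {A B C : Type*} [AddCommGroup A] [Module R A] [AddCommGroup B] [Module R B]
    [AddCommGroup C] [Module R C] (f : A →ₗ[R] B) (g : B →ₗ[R] C) (h : Function.Exact f g)
    (hA : Module.Finite R A) (hC : Module.Finite R C) : Module.Finite R B := by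
  have : IsNoetherian R A := isNoetherian_of_isNoetherianRing_of_finite R A
  have : IsNoetherian R C := isNoetherian_of_isNoetherianRing_of_finite R C
  have := isNoetherian_of_range_eq_ker f g (LinearMap.exact_iff.1 h).symm
  infer_instance

lemma finite_range_of_ker [IsNoetherianRing R] {A B C : Type*} [AddCommGroup A] [Module R A] [AddCommGroup B] [Module R B]
    [AddCommGroup C] [Module R C] (f : A →ₗ[R] B) (g : A →ₗ[R] C) (h : ∀ x, g x = 0 → f x = 0)
    (hC : Module.Finite R C) : Module.Finite R (LinearMap.range f) := by
  have : IsNoetherian R C := isNoetherian_of_isNoetherianRing_of_finite R C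
  have h1 : Module.Finite R (A ⧸ LinearMap.ker g) := Module.Finite.equiv g.quotKerEquivRange.symm
  have h2 : Function.Surjective ((LinearMap.ker g).liftQ f.rangeRestrict (by
    intro x hx
    rw [LinearMap.mem_ker, Subtype.ext_iff]
    exact h x hx)) := by
    rintro ⟨_, x, rfl⟩
    exact ⟨Submodule.Quotient.mk x, rfl⟩
  exact Module.Finite.of_surjective _ h2

namespace Cx
variable (a : Ideal R) (J : Cx R)

/-- inclusion of cocycles -/
def zinc (i : ℤ) : J.Z i →ₗ[R] J.X i := Submodule.inclusion inf_le_right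
/-- differential onto coboundaries -/
def dsur (i : ℤ) : J.X (i-1) →ₗ[R] J.B i := J.d.restrict (fun t ht => ⟨t, ht, rfl⟩)
lemma zinc_inj (i : ℤ) : Function.Injective (J.zinc i) := Submodule.inclusion_injective _
lemma dsur_sur (i : ℤ) : Function.Surjective (J.dsur i) := by
  rintro ⟨_, t, ht, rfl⟩
  exact ⟨⟨t, ht⟩, rfl⟩
lemma zd_exact (i : ℤ) : Function.Exact (J.zinc (i-1)) (J.dsur i) := by
  intro t
  constructor
  · intro h
    exact ⟨⟨t.1, congrArg Subtype.val h, t.2⟩, rfl⟩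
  · rintro ⟨z, rfl⟩
    exact Subtype.ext z.2.1
/-- inclusion of coboundaries -/
def binc (i : ℤ) : J.B i →ₗ[R] J.Z i := Submodule.inclusion (J.B_le_Z i)
lemma binc_inj (i : ℤ) : Function.Injective (J.binc i) := Submodule.inclusion_injective _
/-- projection to cohomology -/
def zpr (i : ℤ) : J.Z i →ₗ[R] J.H i := Submodule.mkQ _
lemma zpr_sur (i : ℤ) : Function.Surjective (J.zpr i) := Submodule.mkQ_surjective _
lemma bz_exact (i : ℤ) : Function.Exact (J.binc i) (J.zpr i) := by
  intro t
  refine (SQ_mk_eq_zero t).trans ?_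
  constructor
  · intro h; exact ⟨⟨t.1, h⟩, rfl⟩
  · rintro ⟨b, rfl⟩; exact b.2

variable {a J}
lemma EE_B_finite [IsNoetherianRing R] (hac : ∀ i, Acyc a (J.X i)) (i : ℤ) (s : ℕ)
    (h : Module.Finite R (EE a (s+2) (J.Z (i-1)))) : Module.Finite R (EE a (s+1) (J.B i)) := by
  obtain ⟨-, δ, h1, -⟩ := EE_les a _ _ (J.zinc_inj (i-1)) (J.dsur_sur i) (J.zd_exact i) (s+1)
  have := hac (i-1) s
  exact finite_of_exact _ _ h1 inferInstance h

lemma EE_Z_finite [IsNoetherianRing R] (hneg : ∀ i < 0, J.X i = ⊥) (hac : ∀ i, Acyc a (J.X i)) (i : ℤ)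
    (hfin : ∀ j < i, Module.Finite R (J.H j)) : ∀ j < i, ∀ s, Module.Finite R (EE a (s+1) (J.Z j)) := by
  have hn : ∀ j < 0, ∀ s, Module.Finite R (EE a (s+1) (J.Z j)) := by
    intro j hj s
    have h0 : J.Z j = ⊥ := by
      rw [eq_bot_iff, ← hneg j hj]; exact inf_le_right
    have : Subsingleton (J.Z j) := by rw [h0]; infer_instance
    exact EE_finite a (s+1)
  have key : ∀ n : ℕ, ∀ j : ℤ, j = n - 1 → j < i → ∀ s, Module.Finite R (EE a (s+1) (J.Z j)) := by
    intro n
    induction n with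
    | zero => intro j hj _ s; exact hn _ (by omega) s
    | succ n ih =>
      intro j hj hni s
      have h1 : j = (n:ℤ) := by push_cast at hj; omega
      subst h1
      have hB := EE_B_finite hac (n:ℤ) s (ih _ rfl (by omega) (s+1))
      have hH := hfin n hni
      obtain ⟨h2, -⟩ := EE_les a _ _ (J.binc_inj n) (J.zpr_sur n) (J.bz_exact n) (s+1)
      exact finite_of_exact _ _ h2 hB (EE_finite a (s+1))
  intro j hj s
  by_cases h : j < 0
  · exact hn j h s
  · exact key (j+1).toNat j (by omega) hj s

/-- comparison from the cohomology of the part killed by `a` -/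
def cmp (a : Ideal R) (J : Cx R) (i : ℤ) : (res a J).H i →ₗ[R] J.H i :=
  SQmap ((res a J).Z i) ((res a J).B i) (J.Z i) (J.B i) (LinearMap.id) (fun _ hz => ⟨hz.1, hz.2.1⟩)
    (by rintro _ ⟨t, ht, rfl⟩; exact ⟨t, ht.1, rfl⟩)

/-- coboundaries killed by `a` mapping to the cohomology of the part killed by `a`. -/
def bcl (a : Ideal R) (J : Cx R) (i : ℤ) : annSub a (J.B i) →ₗ[R] (res a J).H i :=
  (Submodule.mkQ _) ∘ₗ (((J.B i).subtype ∘ₗ (annSub a (J.B i)).subtype).codRestrict ((res a J).Z i) (by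
    intro b
    exact ⟨(J.B_le_Z i b.1.2).1, (J.B_le_Z i b.1.2).2, fun r hr => congrArg Subtype.val (b.2 r hr)⟩))

lemma bcl_eq_zero (i : ℤ) (b : annSub a (J.B i)) : bcl a J i b = 0 ↔ ∃ t ∈ annSub a (J.X (i-1)), J.dsur i t = b := by
  refine (SQ_mk_eq_zero (B := (res a J).B i) _).trans ?_
  constructor
  · rintro ⟨t, ⟨ht1, ht2⟩, ht⟩
    exact ⟨⟨t, ht1⟩, fun r hr => Subtype.ext (ht2 r hr), Subtype.ext ht⟩
  · rintro ⟨t, ht1, ht⟩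
    exact ⟨t.1, ⟨t.2, fun r hr => congrArg Subtype.val (ht1 r hr)⟩, congrArg Subtype.val ht⟩

lemma bcl_cmp_exact (i : ℤ) : Function.Exact (LinearMap.range (bcl a J i)).subtype (cmp a J i) := by
  intro q
  obtain ⟨z, rfl⟩ := Submodule.Quotient.mk_surjective _ q
  constructor
  · intro h
    have hz : z.1 ∈ J.B i := (SQ_mk_eq_zero (B := J.B i) (⟨z.1, z.2.1, z.2.2.1⟩ : J.Z i)).1 h
    refine ⟨⟨Submodule.Quotient.mk z, ⟨⟨⟨z.1, hz⟩, fun r hr => Subtype.ext (z.2.2.2 r hr)⟩, rfl⟩⟩, rfl⟩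
  · rintro ⟨⟨_, b, rfl⟩, hb⟩
    rw [← hb]
    exact (SQ_mk_eq_zero (B := J.B i) (J.binc i b.1)).2 b.1.2

lemma lemmaT [IsNoetherianRing R] (hneg : ∀ i < 0, J.X i = ⊥) (hac : ∀ i, Acyc a (J.X i)) 
    (hk : ∀ i (q : J.H i), ∀ r ∈ a, r • q = 0) (i : ℤ)
    (hfin : ∀ j < i, Module.Finite R (J.H j)) : 
    Module.Finite R ((res a J).H i) ↔ Module.Finite R (J.H i) := by
  have hZ := EE_Z_finite hneg hac i hfin (i-1) (by omega)
  have hB := EE_B_finite hac i 0 (hZ 1)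
  have hK : Module.Finite R (LinearMap.range (bcl a J i)) := by
    obtain ⟨δ, h1, -⟩ := EE_les0 a _ _ (J.zinc_inj (i-1)) (J.dsur_sur i) (J.zd_exact i)
    apply finite_range_of_ker (bcl a J i) δ _ (hZ 0)
    intro b hb
    rw [bcl_eq_zero]
    exact (h1 b).1 hb
  constructor
  · intro h
    obtain ⟨δ, h1, -⟩ := EE_les0 a _ _ (J.binc_inj i) (J.zpr_sur i) (J.bz_exact i)
    let δ' : J.H i →ₗ[R] EE a 1 (J.B i) := δ ∘ₗ (LinearMap.id.codRestrict (annSub a (J.H i)) (fun q => hk i q))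
    refine finite_of_exact (cmp a J i) δ' ?_ h hB
    intro q
    refine (h1 ⟨q, hk i q⟩).trans ?_
    constructor
    · rintro ⟨z, hz, rfl⟩
      exact ⟨Submodule.Quotient.mk ⟨z.1, z.2.1, z.2.2, fun r hr => congrArg Subtype.val (hz r hr)⟩, rfl⟩
    · rintro ⟨p, rfl⟩
      obtain ⟨z, rfl⟩ := Submodule.Quotient.mk_surjective _ p
      exact ⟨⟨z.1, z.2.1, z.2.2.1⟩, fun r hr => Subtype.ext (z.2.2.2 r hr), rfl⟩
  · intro h
    exact finite_of_exact _ _ (bcl_cmp_exact i) hK h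

/-- main link -/
lemma link1 [IsNoetherianRing R] (hneg : ∀ i < 0, J.X i = ⊥) (hac : ∀ i, Acyc a (J.X i)) 
    (hk : ∀ i (q : J.H i), ∀ r ∈ a, r • q = 0) (n : ℤ) :
    (∀ i ≤ n, Module.Finite R ((res a J).H i)) ↔ ∀ i ≤ n, Module.Finite R (J.H i) := by
  have hH0 : ∀ i < 0, Module.Finite R (J.H i) := by
    intro i hi
    have h0 : J.Z i = ⊥ := by
      rw [eq_bot_iff, ← hneg i hi]; exact inf_le_right
    have : Subsingleton (J.Z i) := by rw [h0]; infer_instance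
    infer_instance
  constructor
  · intro h
    have : ∀ m : ℕ, ∀ i < (m:ℤ), i ≤ n → Module.Finite R (J.H i) := by
      intro m
      induction m with
      | zero => intro i hi _; exact hH0 i (by simpa using hi)
      | succ m ih =>
        intro i hi hin
        push_cast at hi
        by_cases him : i < m
        · exact ih i him hin
        · exact (lemmaT hneg hac hk i (fun j hj => ih j (by omega) (by omega))).1 (h i hin)
    intro i hi
    exact this (i+1).toNat i (by omega) hi
  · intro h i hi
    exact (lemmaT hneg hac hk i (fun j hj => h j (by omega))).2 (h i hi)

lemma K_neg (x : R) (hneg : ∀ i < 0, J.X i = ⊥) : ∀ i < 0, (K x J).X i = ⊥ := by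
  intro i hi
  change (J.X i).prod (J.X (i-1)) = _
  rw [hneg i hi, hneg (i-1) (by omega), Submodule.prod_bot]
  rfl

lemma K_acyc (x : R) (hac : ∀ i, Acyc a (J.X i)) : ∀ i, Acyc a ((K x J).X i) := by
  intro i
  let f : (J.X i × J.X (i-1)) →ₗ[R] (K x J).X i :=
    { toFun := fun p => ⟨(p.1.1, p.2.1), p.1.2, p.2.2⟩
      map_add' := fun _ _ => rfl
      map_smul' := fun _ _ => rfl }
  have hf : Function.Bijective f := by
    constructor
    · intro p q h
      have := congrArg Subtype.val h
      exact Prod.ext (Subtype.ext (congrArg Prod.fst this)) (Subtype.ext (congrArg Prod.snd this))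
    · rintro ⟨p, h1, h2⟩
      exact ⟨(⟨p.1, h1⟩, ⟨p.2, h2⟩), rfl⟩
  exact acyc_equiv a (LinearEquiv.ofBijective f hf) (acyc_prod a (hac i) (hac (i-1)))

lemma Y_neg (hneg : ∀ i < 0, J.X i = ⊥) (l : List R) : ∀ i < 0, (J.Y l).X i = ⊥ := by
  induction l with
  | nil => exact hneg
  | cons x l ih => exact K_neg x ih

lemma Y_acyc (hac : ∀ i, Acyc a (J.X i)) (l : List R) : ∀ i, Acyc a ((J.Y l).X i) := by
  induction l with
  | nil => exact hac
  | cons x l ih => exact K_acyc x ih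

lemma Y_NH (l : List R) : ∀ x ∈ l, NH (J.Y l) x := by
  induction l with
  | nil => simp
  | cons x l ih =>
    intro y hy
    rcases List.mem_cons.1 hy with rfl | hy
    · exact NH_K_self _ _
    · exact NH_K _ _ _ (ih y hy)

lemma Y_kill (l : List R) (hl : Ideal.span {x | x ∈ l} = a) (i : ℤ) (q : (J.Y l).H i) : ∀ r ∈ a, r • q = 0 := by
  intro r hr
  rw [← hl] at hr
  exact NH_smul _ _ (NH_span _ _ (Y_NH l) r hr) i q

lemma resY_finite [IsNoetherianRing R] (l : List R) (hl : ∀ x ∈ l, x ∈ a) (n : ℤ) :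
    (∀ i ≤ n, Module.Finite R ((res a J).H i)) ↔ ∀ i ≤ n, Module.Finite R ((res a (J.Y l)).H i) := by
  induction l with
  | nil => exact Iff.rfl
  | cons x l ih =>
    have ih := ih (fun y hy => hl y (List.mem_cons_of_mem _ hy))
    rw [ih]
    change _ ↔ ∀ i ≤ n, Module.Finite R ((res a (K x (J.Y l))).H i)
    rw [res_K]
    have hx : x ∈ a := hl x List.mem_cons_self
    constructor
    · intro h i hi
      exact finite_of_exact _ _ (exact2 x (res a (J.Y l)) i) (h _ (by omega)) (h i hi)
    · intro h i hi
      have := h i hi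
      refine Module.Finite.of_surjective (kout x (res a (J.Y l)) i) ?_
      intro q
      refine (exact3 x (res a (J.Y l)) i q).1 ?_
      rw [mulx_apply]
      exact res_smul a _ x hx i q

end Cx
end cxD4

section cxD5
variable {R : Type u} [CommRing R]

section
variable (C : CochainComplex (ModuleCat.{u} R) ℕ)

/-- component of the total differential -/
def totComp : (n : ℕ) → (∀ n, C.X n) →ₗ[R] C.X n
  | 0 => 0
  | n+1 => (C.d n (n+1)).hom ∘ₗ LinearMap.proj n

/-- total differential -/
def totD : (∀ n, C.X n) →ₗ[R] (∀ n, C.X n) := LinearMap.pi (totComp C)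

lemma totD_zero (f : ∀ n, C.X n) : totD C f 0 = 0 := rfl
lemma totD_succ (f : ∀ n, C.X n) (n : ℕ) : totD C f (n+1) = C.d n (n+1) (f n) := rfl

/-- the complex attached to a cochain complex -/
def totCx : Cx R where
  T := ∀ n, C.X n
  d := totD C
  X i := 
    { carrier := {f | ∀ n : ℕ, (n:ℤ) ≠ i → f n = 0}
      add_mem' := by
        intro f g hf hg n hn
        rw [Pi.add_apply, hf n hn, hg n hn, add_zero]
      zero_mem' := fun n _ => rfl
      smul_mem' := by
        intro c f hf n hn
        rw [Pi.smul_apply, hf n hn, smul_zero] }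
  dd := by
    intro t
    funext n
    match n with
    | 0 => rfl
    | 1 => 
      rw [totD_succ, totD_zero, map_zero]; rfl
    | n+2 =>
      rw [totD_succ, totD_succ]
      have := ConcreteCategory.congr_hom (C.d_comp_d n (n+1) (n+2)) (t n)
      exact this
  dX := by
    intro i t ht n hn
    match n with
    | 0 => rfl
    | n+1 =>
      rw [totD_succ, ht n (by push_cast at hn; omega), map_zero]

lemma totCx_neg : ∀ i < 0, (totCx C).X i = ⊥ := by
  intro i hi
  rw [eq_bot_iff]
  intro f hf
  funext n
  exact hf n (by omega)

lemma totCx_equiv (n : ℕ) : Nonempty (C.X n ≃ₗ[R] (totCx C).X n) := by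
  classical
  let f : C.X n →ₗ[R] (totCx C).X n := (LinearMap.single R (fun n => C.X n) n).codRestrict ((totCx C).X n) (by
    intro c m hm
    have h : m ≠ n := by simpa using hm
    exact Pi.single_eq_of_ne (M := fun n => C.X n) h c)
  refine ⟨LinearEquiv.ofBijective f ⟨?_, ?_⟩⟩
  · intro x y h
    exact Pi.single_injective (M := fun n => C.X n) n (congrArg Subtype.val h)
  · intro t
    refine ⟨t.1 n, Subtype.ext ?_⟩
    funext m
    change Pi.single (M := fun n => C.X n) n (t.1 n) m = t.1 m
    by_cases h : m = n
    · subst h; simp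
    · rw [Pi.single_eq_of_ne h]
      exact (t.2 m (by simpa using h)).symm

lemma totCx_acyc (a : Ideal R) (h : ∀ n, Injective (C.X n)) : ∀ i, Acyc a ((totCx C).X i) := by
  intro i
  by_cases hi : i < 0
  · have : Subsingleton ((totCx C).X i) := by rw [totCx_neg C i hi]; infer_instance
    have hz : Limits.IsZero (ModuleCat.of R ((totCx C).X i)) := ModuleCat.isZero_of_subsingleton _
    have : Injective (ModuleCat.of R ((totCx C).X i)) := hz.injective
    exact acyc_of_injective a (ModuleCat.of R ((totCx C).X i))
  · obtain ⟨n, rfl⟩ := Int.eq_ofNat_of_zero_le (not_lt.1 hi)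
    obtain ⟨e⟩ := totCx_equiv C n
    have := h n
    exact acyc_equiv a e (acyc_of_injective a (C.X n))

lemma totCx_H (n : ℕ) (h : Function.Exact (C.d n (n+1)) (C.d (n+1) (n+2))) : 
    (totCx C).B ((n:ℤ)+1) = (totCx C).Z ((n:ℤ)+1) := by
  classical
  apply le_antisymm ((totCx C).B_le_Z _)
  rintro f ⟨hf, hfX⟩
  have hf' : totD C f = 0 := hf
  have h1 : C.d (n+1) (n+2) (f (n+1)) = 0 := by
    exact congrFun hf' (n+2)
  obtain ⟨g, hg⟩ := (h _).1 h1
  refine ⟨Pi.single n g, ?_, ?_⟩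
  · intro m hm
    have h : m ≠ n := by
      intro h; apply hm; subst h; ring
    exact Pi.single_eq_of_ne (M := fun n => C.X n) h g
  · funext m
    match m with
    | 0 => exact (hfX 0 (by push_cast; omega)).symm
    | m+1 =>
      change C.d m (m+1) (Pi.single (M := fun n => C.X n) n g m) = f (m+1)
      by_cases hmn : m = n
      · subst hmn
        rw [Pi.single_eq_same, hg]
      · rw [Pi.single_eq_of_ne hmn, map_zero]
        exact (hfX (m+1) (by push_cast; omega)).symm

lemma totCx_Z0 (M : ModuleCat.{u} R) (ι : M ⟶ C.X 0) (hi : Function.Injective ι)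
    (h : Function.Exact ι (C.d 0 1)) : Nonempty (M ≃ₗ[R] (totCx C).Z 0) := by
  classical
  let f : M →ₗ[R] (totCx C).Z 0 := (LinearMap.single R (fun n => C.X n) 0 ∘ₗ ι.hom).codRestrict ((totCx C).Z 0) (by
    intro c
    refine ⟨?_, ?_⟩
    · funext m
      match m with
      | 0 => rfl
      | 1 =>
        change C.d 0 1 (Pi.single (M := fun n => C.X n) 0 (ι c) 0) = 0
        rw [Pi.single_eq_same]
        exact h.apply_apply_eq_zero c
      | m+2 =>
        change C.d (m+1) (m+2) (Pi.single (M := fun n => C.X n) 0 (ι c) (m+1)) = 0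
        rw [Pi.single_eq_of_ne (by omega), map_zero]
    · intro m hm
      have h : m ≠ 0 := by simpa using hm
      exact Pi.single_eq_of_ne (M := fun n => C.X n) h (ι c))
  refine ⟨LinearEquiv.ofBijective f ⟨?_, ?_⟩⟩
  · intro x y hxy
    exact hi (Pi.single_injective (M := fun n => C.X n) 0 (congrArg Subtype.val hxy))
  · rintro ⟨t, ht, htX⟩
    have ht' : totD C t = 0 := ht
    have h1 : C.d 0 1 (t 0) = 0 := by
      exact congrFun ht' 1
    obtain ⟨m, hm⟩ := (h _).1 h1
    refine ⟨m, Subtype.ext ?_⟩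
    funext k
    change Pi.single (M := fun n => C.X n) 0 (ι m) k = t k
    by_cases hk : k = 0
    · subst hk; rw [Pi.single_eq_same, hm]
    · rw [Pi.single_eq_of_ne hk]
      exact (htX k (by simpa using hk)).symm
end

/-- existence of an injective resolution in our format -/
lemma exists_resCx (a : Ideal R) (M : ModuleCat.{u} R) : ∃ J : Cx R, (∀ i < 0, J.X i = ⊥) ∧ (∀ i, Acyc a (J.X i)) ∧
    (∀ i ≥ 1, J.B i = J.Z i) ∧ Nonempty (M ≃ₗ[R] J.Z 0) := by
  let I := injectiveResolution M
  refine ⟨totCx I.cocomplex, totCx_neg _, totCx_acyc _ a (fun n => I.injective n), ?_, ?_⟩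
  · intro i hi
    obtain ⟨n, rfl⟩ : ∃ n : ℕ, i = (n:ℤ)+1 := ⟨(i-1).toNat, by omega⟩
    apply totCx_H
    exact (ShortComplex.ShortExact.moduleCat_exact_iff_function_exact _).1 (I.exact_succ n)
  · refine totCx_Z0 _ M (I.ι.f 0 : M ⟶ I.cocomplex.X 0) ?_ ?_
    · exact (ModuleCat.mono_iff_injective _).1 (inferInstanceAs (Mono (I.ι.f 0)))
    · exact (ShortComplex.ShortExact.moduleCat_exact_iff_function_exact _).1 I.exact₀

variable {a : Ideal R} {J : Cx R}
lemma EE_shift [IsNoetherianRing R] (hac : ∀ i, Acyc a (J.X i)) (hex : ∀ i ≥ 1, J.B i = J.Z i) 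
   (n : ℕ) : ∀ s : ℕ, Module.Finite R (EE a (s+1) (J.Z n)) ↔ Module.Finite R (EE a (s+1+n) (J.Z 0)) := by
  induction n with
  | zero => intro s; exact Iff.rfl
  | succ n ih =>
    intro s
    obtain ⟨-, δ, h1, h2⟩ := EE_les a _ _ (J.zinc_inj _) (J.dsur_sur (n+1)) (J.zd_exact _) (s+1)
    have e1 := LinearEquiv.ofEq _ _ (hex (n+1) (by omega))
    obtain ⟨e⟩ := EE_equiv a e1 (s+1)
    have hnn : ((n:ℤ)+1-1) = n := by ring
    have e2 := LinearEquiv.ofEq _ _ (congrArg J.Z hnn)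
    obtain ⟨e3⟩ := EE_equiv a e2 (s+1+1)
    have := hac (n+1-1) s
    have := hac (n+1-1) (s+1)
    have hδ : Function.Bijective δ := by
      constructor
      · rw [injective_iff_map_eq_zero]
        intro x hx
        obtain ⟨y, rfl⟩ := (h1 x).1 hx
        rw [Subsingleton.elim y 0, map_zero]
      · intro y
        exact (h2 y).1 (Subsingleton.elim _ _)
    have e4 := LinearEquiv.ofBijective δ hδ
    have h5 := Module.Finite.equiv_iff (e.symm.trans (e4.trans e3))
    have h6 := ih (s+1)
    have h7 : s + 1 + (n+1) = s + 1 + 1 + n := by ring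
    rw [h7, ← h6]
    exact_mod_cast h5

lemma res_finite_iff [IsNoetherianRing R] (hneg : ∀ i < 0, J.X i = ⊥) (hac : ∀ i, Acyc a (J.X i)) (hex : ∀ i ≥ 1, J.B i = J.Z i)
    {M : Type u} [AddCommGroup M] [Module R M] (e : M ≃ₗ[R] J.Z 0) (n : ℕ) :
    Module.Finite R ((Cx.res a J).H n) ↔ Module.Finite R (EE a n M) := by
  obtain ⟨eM⟩ := EE_equiv a e n
  rw [Module.Finite.equiv_iff eM]
  cases n with
  | zero =>
    have e1 := LinearEquiv.ofBijective _ (annEE_bij a (J.Z 0))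
    rw [← Module.Finite.equiv_iff e1]
    let f : annSub a (J.Z 0) →ₗ[R] (Cx.res a J).H 0 := (Submodule.mkQ _) ∘ₗ
      (((J.Z 0).subtype ∘ₗ (annSub a (J.Z 0)).subtype).codRestrict ((Cx.res a J).Z 0) (by
      intro b
      exact ⟨b.1.2.1, b.1.2.2, fun r hr => congrArg Subtype.val (b.2 r hr)⟩))
    have hf : Function.Bijective f := by
      constructor
      · rw [injective_iff_map_eq_zero]
        intro b hb
        obtain ⟨t, ⟨ht, _⟩, htb⟩ := (SQ_mk_eq_zero (B := (Cx.res a J).B 0) _).1 hb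
        have ht' : t ∈ J.X (0-1) := ht
        rw [hneg (0-1) (by omega)] at ht'
        have ht0 : t = 0 := ht'
        have : (Cx.res a J).d t = b.1.1 := htb
        rw [ht0, map_zero] at this
        exact Subtype.ext (Subtype.ext this.symm)
      · intro q
        obtain ⟨z, rfl⟩ := Submodule.Quotient.mk_surjective _ q
        exact ⟨⟨⟨z.1, z.2.1, z.2.2.1⟩, fun r hr => Subtype.ext (z.2.2.2 r hr)⟩, rfl⟩
    exact (Module.Finite.equiv_iff (LinearEquiv.ofBijective f hf)).symm
  | succ n =>
    have h0 := EE_shift hac hex n 0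
    have h7 : 0 + 1 + n = n + 1 := by ring
    rw [h7] at h0
    rw [← h0]
    obtain ⟨δ, h1, h2⟩ := EE_les0 a _ _ (J.zinc_inj _) (J.dsur_sur (n+1)) (J.zd_exact _)
    have hnn : ((n:ℤ)+1-1) = n := by ring
    have e2 := LinearEquiv.ofEq _ _ (congrArg J.Z hnn)
    obtain ⟨e3⟩ := EE_equiv a e2 (0+1)
    rw [← Module.Finite.equiv_iff e3]
    have := hac (n+1-1) 0
    have hδ : Function.Surjective δ := fun y => (h2 y).1 (Subsingleton.elim _ _)
    have hb : Function.Surjective (Cx.bcl a J (n+1)) := by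
      intro q
      obtain ⟨z, rfl⟩ := Submodule.Quotient.mk_surjective _ q
      have hz : z.1 ∈ J.B (n+1) := by
        rw [hex (n+1) (by omega)]
        exact ⟨z.2.1, z.2.2.1⟩
      exact ⟨⟨⟨z.1, hz⟩, fun r hr => Subtype.ext (z.2.2.2 r hr)⟩, rfl⟩
    have hker : LinearMap.ker (Cx.bcl a J (n+1)) = LinearMap.ker δ := by
      ext b
      rw [LinearMap.mem_ker, LinearMap.mem_ker, Cx.bcl_eq_zero, h1]
    exact Module.Finite.equiv_iff (((Cx.bcl a J (n+1)).quotKerEquivOfSurjective hb).symm.trans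
      ((Submodule.quotEquivOfEq _ _ hker).trans (δ.quotKerEquivOfSurjective hδ)))

/-- the final link -/
lemma koszul_link [IsNoetherianRing R] (hneg : ∀ i < 0, J.X i = ⊥) (hac : ∀ i, Acyc a (J.X i)) (hex : ∀ i ≥ 1, J.B i = J.Z i)
    {M : Type u} [AddCommGroup M] [Module R M] (e : M ≃ₗ[R] J.Z 0) (l : List R) (hl : Ideal.span {x | x ∈ l} = a) (n : ℕ) :
    (∀ i ≤ (n:ℤ), Module.Finite R ((J.Y l).H i)) ↔ ∀ i ≤ n, Module.Finite R (EE a i M) := by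
  rw [← Cx.link1 (Cx.Y_neg hneg l) (Cx.Y_acyc hac l) (Cx.Y_kill l hl), ← Cx.resY_finite l 
    (fun x hx => hl ▸ Ideal.subset_span hx)]
  constructor
  · intro h i hi
    rw [← res_finite_iff hneg hac hex e i]
    exact h i (by omega)
  · intro h i hi
    by_cases h0 : i < 0
    · have h1 : (Cx.res a J).Z i = ⊥ := by
        rw [eq_bot_iff]
        intro t ht
        have : t ∈ J.X i := ht.2.1
        rw [hneg i h0] at this
        exact this
      have : Subsingleton ((Cx.res a J).Z i) := by rw [h1]; infer_instance
      infer_instance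
    · obtain ⟨k, rfl⟩ := Int.eq_ofNat_of_zero_le (not_lt.1 h0)
      exact (res_finite_iff hneg hac hex e k).2 (h k (by omega))
end cxD5

section artD6
variable {R : Type u} [CommRing R]

/-- prime avoidance with one extra ideal -/
lemma avoid (a b : Ideal R) (W : Set (PrimeSpectrum R)) (hW : W.Finite) (hab : ¬ a ≤ b)
    (h : ∀ p ∈ W, ¬ a ≤ p.asIdeal) : ∃ x ∈ a, x ∉ b ∧ ∀ p ∈ W, x ∉ p.asIdeal := by
  by_contra hcon
  push Not at hcon
  let f : Option (PrimeSpectrum R) → Ideal R := fun o => o.elim b (fun p => p.asIdeal)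
  have hfin : (insert none (Set.image some W)).Finite := (hW.image some).insert none
  have := (Ideal.subset_union_prime_finite (f := f) hfin none none (I := a) (by
    rintro (_ | i) hi h1 _
    · exact absurd rfl h1
    · exact i.isPrime)).1 (by
      intro x hx
      rw [Set.mem_iUnion₂]
      by_cases hb : x ∈ b
      · exact ⟨none, Set.mem_insert _ _, hb⟩
      · obtain ⟨p, hp, hxp⟩ := hcon x hx hb
        exact ⟨some p, Set.mem_insert_of_mem _ ⟨p, hp, rfl⟩, hxp⟩)
  obtain ⟨i, hi, hai⟩ := this
  rcases i with _ | i
  · exact hab hai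
  · rcases hi with hi | ⟨p, hp, hpi⟩
    · cases hi
    · cases hpi
      exact h _ hp hai

/-- kernel of multiplication -/
def kx (x : R) (N : Type u) [AddCommGroup N] [Module R N] : Submodule R N := LinearMap.ker (LinearMap.lsmul R N x)
lemma mem_kx {x : R} {N : Type u} [AddCommGroup N] [Module R N] {t : N} : t ∈ kx x N ↔ x • t = 0 := Iff.rfl
/-- image of multiplication -/
def xN (x : R) (N : Type u) [AddCommGroup N] [Module R N] : Submodule R N := LinearMap.range (LinearMap.lsmul R N x)
lemma mem_xN {x : R} {N : Type u} [AddCommGroup N] [Module R N] {t : N} : t ∈ xN x N ↔ ∃ s, x • s = t := Iff.rfl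

lemma artin_one (y : R) (C : Type u) [AddCommGroup C] [Module R C] (ht : ∀ c : C, ∃ n : ℕ, y ^ n • c = 0)
    (h : IsArtinian R (kx y C)) : IsArtinian R C := by
  rw [← monotone_stabilizes_iff_artinian]
  intro N
  have hN : ∀ i j, i ≤ j → (N j).ofDual ≤ (N i).ofDual := fun i j hij => N.monotone hij
  let K : ℕ → ℕ → Submodule R (kx y C) := fun n i =>
    { carrier := {t | ∃ c ∈ (N i).ofDual, y ^ n • c = t.1}
      add_mem' := by
        rintro s t ⟨c, hc, h1⟩ ⟨c', hc', h2⟩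
        exact ⟨c + c', add_mem hc hc', by rw [smul_add, h1, h2]; rfl⟩
      zero_mem' := ⟨0, zero_mem _, smul_zero _⟩
      smul_mem' := by
        rintro r t ⟨c, hc, h1⟩
        exact ⟨r • c, Submodule.smul_mem _ _ hc, by rw [smul_comm, h1]; rfl⟩ }
  have hK : ∀ n i m j, n ≤ m → i ≤ j → K m j ≤ K n i := by
    rintro n i m j hnm hij t ⟨c, hc, h1⟩
    refine ⟨y ^ (m - n) • c, Submodule.smul_mem _ _ (hN i j hij hc), ?_⟩
    rw [smul_smul, ← pow_add, Nat.add_sub_cancel' hnm, h1]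
  obtain ⟨i0, hi0⟩ := IsArtinian.monotone_stabilizes (R := R) (M := kx y C)
    ⟨fun i => OrderDual.toDual (K i i), fun i j hij => hK _ _ _ _ hij hij⟩
  have h1 : ∀ n, ∃ k, ∀ i, k ≤ i → K n k = K n i := fun n => IsArtinian.monotone_stabilizes (R := R) (M := kx y C)
    ⟨fun i => OrderDual.toDual (K n i), fun i j hij => hK _ _ _ _ le_rfl hij⟩
  choose k hk using h1
  let I := i0 + ∑ n ∈ Finset.range i0, k n
  have hI : ∀ n i, I ≤ i → K n I ≤ K n i := by
    intro n i hi
    by_cases hn : n < i0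
    · have h3 : k n ≤ I := le_trans (Finset.single_le_sum (f := k) (fun _ _ => Nat.zero_le _) (Finset.mem_range.2 hn)) (Nat.le_add_left _ _)
      rw [← hk n I h3, ← hk n i (h3.trans hi)]
    · push Not at hn
      have h3 : i0 ≤ I := Nat.le_add_right _ _
      have h4 : K i0 i0 = K (max n i) (max n i) := hi0 (max n i) (le_max_of_le_left hn)
      calc K n I ≤ K i0 i0 := hK _ _ _ _ hn h3
        _ = K (max n i) (max n i) := h4
        _ ≤ K n i := hK _ _ _ _ (le_max_left _ _) (le_max_right _ _)
  refine ⟨I, fun i hi => ?_⟩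
  apply le_antisymm (N.monotone hi)
  have key : ∀ n : ℕ, ∀ x ∈ (N I).ofDual, y ^ n • x = 0 → x ∈ (N i).ofDual := by
    intro n
    induction n with
    | zero => intro x _ hx; rw [pow_zero, one_smul] at hx; rw [hx]; exact zero_mem _
    | succ n ih =>
      intro x hx hx0
      have h5 : (⟨y ^ n • x, by rw [mem_kx, smul_smul, ← pow_succ', hx0]⟩ : kx y C) ∈ K n I := ⟨x, hx, rfl⟩
      obtain ⟨x', hx', h6⟩ := hI n i hi h5
      have h7 : x - x' ∈ (N i).ofDual := ih _ (sub_mem hx (hN _ _ hi hx')) (by rw [smul_sub, h6, sub_self])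
      have := add_mem h7 hx'
      rwa [sub_add_cancel] at this
  intro x hx
  obtain ⟨n, hn⟩ := ht x
  exact key n x hx hn

lemma artin_list (l : List R) : ∀ (C : Type u) [AddCommGroup C] [Module R C],
    (∀ x ∈ l, ∀ c : C, ∃ n : ℕ, x ^ n • c = 0) → IsArtinian R (annSub (Ideal.span {x | x ∈ l}) C) → IsArtinian R C := by
  induction l with
  | nil =>
    intro C _ _ _ h
    have : Function.Injective (LinearMap.id.codRestrict (annSub (Ideal.span {x | x ∈ ([] : List R)}) C) (by
      intro c r hr
      have : r = 0 := by simpa using hr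
      rw [this, zero_smul])) := fun x y h => congrArg Subtype.val h
    exact isArtinian_of_injective _ this
  | cons x l ih =>
    intro C _ _ ht h
    apply artin_one x C (ht x (by simp))
    apply ih
    · intro y hy c
      obtain ⟨n, hn⟩ := ht y (by simp [hy]) c.1
      exact ⟨n, Subtype.ext hn⟩
    · let f : annSub (Ideal.span {y | y ∈ l}) (kx x C) →ₗ[R] annSub (Ideal.span {y | y ∈ x :: l}) C :=
        (((kx x C).subtype) ∘ₗ Submodule.subtype _).codRestrict _ (by
          intro c r hr
          change r • c.1.1 = 0
          induction hr using Submodule.span_induction with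
          | mem r hr =>
            rcases List.mem_cons.1 hr with rfl | hr
            · exact c.1.2
            · exact congrArg Subtype.val (c.2 r (Ideal.subset_span hr))
          | zero => exact zero_smul _ _
          | add r s _ _ h1 h2 => rw [add_smul, h1, h2, add_zero]
          | smul r s _ h1 => rw [smul_assoc, h1, smul_zero])
      exact isArtinian_of_injective f (fun x y h => Subtype.ext (Subtype.ext (congrArg (fun t => t.1) h)))

lemma artin_of_ann [IsNoetherianRing R] (a : Ideal R) (C : Type u) [AddCommGroup C] [Module R C]
    (ht : ∀ c : C, ∃ n : ℕ, ∀ r ∈ a ^ n, r • c = 0) (h : IsArtinian R (annSub a C)) : IsArtinian R C := by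
  obtain ⟨s, hs⟩ := (IsNoetherian.noetherian a)
  have h1 : Ideal.span {x | x ∈ s.toList} = a := by rw [← hs]; congr 1; ext; simp
  apply artin_list s.toList C
  · intro x hx c
    obtain ⟨n, hn⟩ := ht c
    exact ⟨n, hn _ (Ideal.pow_mem_pow (h1 ▸ Ideal.subset_span hx) n)⟩
  · rw [h1]; exact h

end artD6

section secD7
variable {R : Type u} [CommRing R]
variable {C : Type u} [AddCommGroup C] [Module R C]

/-- secondary module -/
def Sec (S : Submodule R C) : Prop := ∀ r : R, (∀ s ∈ S, ∃ t ∈ S, r • t = s) ∨ ∃ n : ℕ, ∀ s ∈ S, r ^ n • s = 0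

lemma sec_decomp [IsArtinian R C] (N : Submodule R C) :
    ∃ t : Set (Submodule R C), t.Finite ∧ (∀ S ∈ t, Sec S) ∧ N = sSup t := by
  induction N using WellFoundedLT.induction with
  | ind N ih =>
    by_cases hs : Sec N
    · exact ⟨{N}, Set.finite_singleton N, by simpa using hs, by simp⟩
    · unfold Sec at hs
      push Not at hs
      obtain ⟨x, ⟨s0, hs0, h1⟩, h2⟩ := hs
      let A : ℕ → Submodule R C := fun n => N.map (LinearMap.lsmul R C (x ^ n))
      have hA : ∀ n m, n ≤ m → A m ≤ A n := by
        rintro n m hnm _ ⟨s, hs, rfl⟩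
        refine ⟨x ^ (m - n) • s, N.smul_mem _ hs, ?_⟩
        change x ^ n • x ^ (m - n) • s = x ^ m • s
        rw [smul_smul, ← pow_add, Nat.add_sub_cancel' hnm]
      obtain ⟨k, hk⟩ := IsArtinian.monotone_stabilizes (R := R) (M := C)
        ⟨fun i => OrderDual.toDual (A i), fun i j hij => hA _ _ hij⟩
      have hk' : A (k+1) = A (k + 1 + (k + 1)) := by
        have e1 : A k = A (k+1) := hk _ (by omega)
        have e2 : A k = A (k+1+(k+1)) := hk _ (by omega)
        rw [← e1, e2]
      let B := N ⊓ kx (x ^ (k+1)) C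
      have hsup : N = A (k+1) ⊔ B := by
        apply le_antisymm
        · intro s hs
          have : x ^ (k+1) • s ∈ A (k+1+(k+1)) := hk' ▸ ⟨s, hs, rfl⟩
          obtain ⟨t, ht, hts⟩ := this
          have hts' : x ^ (k+1+(k+1)) • t = x ^ (k+1) • s := hts
          have h3 : s = x ^ (k+1) • t + (s - x ^ (k+1) • t) := by abel
          rw [h3]
          refine Submodule.add_mem_sup ⟨t, ht, rfl⟩ ⟨sub_mem hs (N.smul_mem _ ht), ?_⟩
          rw [SetLike.mem_coe, mem_kx, smul_sub, smul_smul, ← pow_add, hts', sub_self]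
        · apply sup_le _ inf_le_left
          rintro _ ⟨s, hs, rfl⟩
          exact N.smul_mem _ hs
      have hA1 : A (k+1) < N := by
        refine lt_of_le_of_ne (by rw [hsup]; exact le_sup_left) ?_
        intro h
        rw [← h] at hs0
        obtain ⟨t, ht, hts⟩ := hs0
        apply h1 (x ^ k • t) (N.smul_mem _ ht)
        rw [smul_smul, ← pow_succ']
        exact hts
      have hB1 : B < N := by
        refine lt_of_le_of_ne inf_le_left ?_
        intro h
        obtain ⟨s, hs, h4⟩ := h2 (k+1)
        rw [← h] at hs
        exact h4 hs.2
      obtain ⟨t1, f1, s1, e1⟩ := ih _ hA1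
      obtain ⟨t2, f2, s2, e2⟩ := ih _ hB1
      refine ⟨t1 ∪ t2, f1.union f2, ?_, ?_⟩
      · rintro S (h | h)
        · exact s1 S h
        · exact s2 S h
      · rw [sSup_union, ← e1, ← e2]; exact hsup

lemma Sec.prime {S : Submodule R C} (hS : Sec S) (h0 : (S.annihilator).radical ≠ ⊤) : (S.annihilator).radical.IsPrime := by
  refine ⟨h0, ?_⟩
  have key : ∀ r, r ∉ S.annihilator.radical → ∀ n : ℕ, ∀ s ∈ S, ∃ t ∈ S, r ^ n • t = s := by
    intro r hr n
    rcases hS r with h | ⟨n, hn⟩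
    · induction n with
      | zero => intro s hs; exact ⟨s, hs, by simp⟩
      | succ n ih =>
        intro s hs
        obtain ⟨t, ht, rfl⟩ := ih s hs
        obtain ⟨t', ht', rfl⟩ := h t ht
        exact ⟨t', ht', by rw [pow_succ, smul_smul]⟩
    · exact absurd ⟨n, Submodule.mem_annihilator.2 hn⟩ hr
  intro x y hxy
  by_contra hcon
  push Not at hcon
  obtain ⟨n, hn⟩ := hxy
  apply hcon.2
  refine ⟨n, Submodule.mem_annihilator.2 ?_⟩
  intro s hs
  obtain ⟨t, ht, rfl⟩ := key x hcon.1 n s hs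
  rw [smul_smul, ← mul_pow, mul_comm]
  exact Submodule.mem_annihilator.1 hn t ht

lemma annSub_pow_finite [IsNoetherianRing R] (a : Ideal R) (C : Type u) [AddCommGroup C] [Module R C]
    (h : Module.Finite R (annSub a C)) (k : ℕ) : Module.Finite R (annSub (a ^ k) C) := by
  induction k with
  | zero =>
    have : Subsingleton (annSub (a ^ 0) C) := ⟨fun x y => by
      have : ∀ z : annSub (a ^ 0) C, z = 0 := fun z => Subtype.ext (by
        have := z.2 1 (by simp)
        rwa [one_smul] at this)
      rw [this x, this y]⟩
    infer_instance
  | succ k ih =>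
    obtain ⟨s, hs⟩ := (IsNoetherian.noetherian a)
    let f : annSub a C →ₗ[R] annSub (a ^ (k+1)) C := Submodule.inclusion (by
      intro c hc r hr
      exact hc r (Ideal.pow_le_self (by omega) hr))
    let g : annSub (a ^ (k+1)) C →ₗ[R] (s → annSub (a ^ k) C) := LinearMap.pi (fun x => 
      ((LinearMap.lsmul R C x.1) ∘ₗ Submodule.subtype _).codRestrict _ (by
        intro c r hr
        change r • x.1 • c.1 = 0
        rw [smul_smul]
        exact c.2 _ (by rw [pow_succ]; exact Ideal.mul_mem_mul hr (hs ▸ Ideal.subset_span x.2))))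
    refine finite_of_exact f g ?_ h inferInstance
    intro c
    constructor
    · intro hc
      refine ⟨⟨c.1, ?_⟩, rfl⟩
      intro r hr
      rw [← hs] at hr
      induction hr using Submodule.span_induction with
      | mem r hr => exact congrArg Subtype.val (congrFun hc ⟨r, hr⟩)
      | zero => exact zero_smul _ _
      | add r s _ _ h1 h2 => rw [add_smul, h1, h2, add_zero]
      | smul r s _ h1 => rw [smul_assoc, h1, smul_zero]
    · rintro ⟨d, rfl⟩
      funext x
      exact Subtype.ext (d.2 x.1 (hs ▸ Ideal.subset_span x.2))

lemma A2p [IsNoetherianRing R] (a : Ideal R) (C : Type u) [AddCommGroup C] [Module R C] [IsArtinian R C]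
    (h : Module.Finite R (annSub a C)) : ∃ W : Set (PrimeSpectrum R), W.Finite ∧ (∀ p ∈ W, ¬ a ≤ p.asIdeal) ∧
      ∀ x ∈ a, (∀ p ∈ W, x ∉ p.asIdeal) → Module.Finite R (C ⧸ xN x C) := by
  obtain ⟨t, ht, hS, hsup⟩ := sec_decomp (⊤ : Submodule R C)
  refine ⟨{p | (∃ S ∈ t, p.asIdeal = S.annihilator.radical) ∧ ¬ a ≤ p.asIdeal}, ?_, fun p hp => hp.2, ?_⟩
  · have hfin : (Set.image (fun S : Submodule R C => S.annihilator.radical) t).Finite := ht.image _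
    refine (hfin.preimage (f := PrimeSpectrum.asIdeal) (fun p _ q _ h => PrimeSpectrum.ext h)).subset ?_
    rintro p ⟨⟨S, hS, hp⟩, _⟩
    exact ⟨S, hS, hp.symm⟩
  · intro x hx hxp
    have hfg : ∃ F : Submodule R C, F.FG ∧ ⊤ ≤ F ⊔ xN x C := by
      have : ∀ S ∈ t, ∃ F : Submodule R C, F.FG ∧ S ≤ F ⊔ xN x C := by
        intro S hSt
        by_cases haS : a ≤ S.annihilator.radical
        · obtain ⟨n, hn⟩ := Ideal.exists_radical_pow_le_of_fg S.annihilator (IsNoetherian.noetherian _)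
          have h1 : a ^ n ≤ S.annihilator := (Ideal.pow_right_mono haS n).trans hn
          have h2 := annSub_pow_finite a C h n
          refine ⟨annSub (a ^ n) C, (Module.Finite.iff_fg.1 h2), le_trans ?_ le_sup_left⟩
          intro s hs r hr
          exact Submodule.mem_annihilator.1 (h1 hr) s hs
        · have hp := (hS S hSt).prime (fun h => haS (h ▸ le_top))
          have hxS := hxp ⟨_, hp⟩ ⟨⟨S, hSt, rfl⟩, haS⟩
          refine ⟨⊥, Submodule.fg_bot, le_trans ?_ le_sup_right⟩
          intro s hs
          rcases hS S hSt x with h | ⟨n, hn⟩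
          · obtain ⟨t, _, h⟩ := h s hs
            exact ⟨t, h⟩
          · exact absurd ⟨n, Submodule.mem_annihilator.2 hn⟩ hxS
      choose! F hF1 hF2 using this
      refine ⟨⨆ S ∈ t, F S, Submodule.fg_biSup ht.toFinset F (fun S hS => hF1 S (ht.mem_toFinset.1 hS)) |> fun h => by simpa using h, ?_⟩
      rw [hsup]
      apply sSup_le
      intro S hS
      refine (hF2 S hS).trans (sup_le_sup_right ?_ _)
      exact le_biSup F hS
    obtain ⟨F, hF, htop⟩ := hfg
    have : Module.Finite R F := Module.Finite.iff_fg.2 hF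
    refine Module.Finite.of_surjective ((xN x C).mkQ ∘ₗ F.subtype) ?_
    intro q
    obtain ⟨c, rfl⟩ := Submodule.Quotient.mk_surjective _ q
    obtain ⟨f, hf, z, hz, hc⟩ := Submodule.mem_sup.1 (htop (Submodule.mem_top (x := c)))
    refine ⟨⟨f, hf⟩, ?_⟩
    refine (Submodule.Quotient.eq _).2 ?_
    rw [← hc]
    simpa using hz

lemma A1p_aux [IsNoetherianRing R] (a : Ideal R) (b : Ideal R) : b ≤ a → ∀ (C : Type u) [AddCommGroup C] [Module R C] [IsArtinian R C]
    (D : Type u) [AddCommGroup D] [Module R D] (f : C →ₗ[R] D), Function.Surjective f → (∀ r ∈ b, ∀ c : C, r • c = 0) → 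
     Module.Finite R (annSub a C) → Module.Finite R (annSub a D) := by
  induction b using WellFoundedGT.induction with
  | ind b ih =>
    intro hba C _ _ _ D _ _ f hf hb h
    by_cases hab : a ≤ b
    · have : Module.Finite R C := by
        refine Module.Finite.of_surjective (annSub a C).subtype (fun c => ⟨⟨c, fun r hr => hb r (hab hr) c⟩, rfl⟩)
      have : Module.Finite R D := Module.Finite.of_surjective f hf
      have : IsNoetherian R D := isNoetherian_of_isNoetherianRing_of_finite R D
      exact Module.Finite.iff_fg.2 (IsNoetherian.noetherian _)
    · let C' := LinearMap.ker f
      have hC' : Module.Finite R (annSub a C') := by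
        have : IsNoetherian R (annSub a C) := isNoetherian_of_isNoetherianRing_of_finite R _
        exact Module.Finite.of_injective ((C'.subtype ∘ₗ (annSub a C').subtype).codRestrict (annSub a C) (by
          intro c r hr
          exact congrArg Subtype.val (c.2 r hr))) (fun x y h => Subtype.ext (Subtype.ext (congrArg (fun t => t.1) h)))
      obtain ⟨W, hW, hWa, hx⟩ := A2p a C' hC'
      obtain ⟨x, hxa, hxb, hxW⟩ := avoid a b W hW hab hWa
      have hfin := hx x hxa hxW
      -- the image of kx x C in D
      let f1 : kx x C →ₗ[R] D := f ∘ₗ (kx x C).subtype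
      have h1 : Module.Finite R (annSub a (LinearMap.range f1)) := by
        refine ih (b ⊔ Ideal.span {x}) ?_ ?_ (kx x C) (LinearMap.range f1) f1.rangeRestrict f1.surjective_rangeRestrict ?_ ?_
        · refine lt_of_le_of_ne le_sup_left ?_
          intro h
          apply hxb
          rw [h]
          exact Ideal.mem_sup_right (Ideal.mem_span_singleton_self x)
        · exact sup_le hba ((Ideal.span_singleton_le_iff_mem a).2 hxa)
        · intro r hr c
          obtain ⟨r1, hr1, r2, hr2, rfl⟩ := Submodule.mem_sup.1 hr
          obtain ⟨s, rfl⟩ := Ideal.mem_span_singleton'.1 hr2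
          apply Subtype.ext
          change (r1 + s * x) • c.1 = 0
          rw [add_smul, hb r1 hr1, mul_smul, mem_kx.1 c.2, smul_zero, add_zero]
        · have : IsNoetherian R (annSub a C) := isNoetherian_of_isNoetherianRing_of_finite R _
          exact Module.Finite.of_injective (((kx x C).subtype ∘ₗ (annSub a (kx x C)).subtype).codRestrict (annSub a C) (by
            intro c r hr
            exact congrArg Subtype.val (c.2 r hr))) (fun x y h => Subtype.ext (Subtype.ext (congrArg (fun t => t.1) h)))
      let E : Submodule R C := C'.comap (LinearMap.lsmul R C x)
      let φ : E →ₗ[R] (C' ⧸ xN x C') := (xN x C').mkQ ∘ₗ ((LinearMap.lsmul R C x) ∘ₗ E.subtype).codRestrict C' (fun e => e.2)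
      let g : E →ₗ[R] (D ⧸ LinearMap.range f1) := (LinearMap.range f1).mkQ ∘ₗ f ∘ₗ E.subtype
      have h2 : Module.Finite R (LinearMap.range g) := by
        apply finite_range_of_ker g φ _ hfin
        intro e he
        obtain ⟨c', hc'⟩ := (Submodule.Quotient.mk_eq_zero _).1 he
        have hc2 : x • c'.1 = x • e.1 := congrArg Subtype.val hc'
        refine (Submodule.Quotient.mk_eq_zero _).2 ?_
        refine ⟨⟨e.1 - c'.1, ?_⟩, ?_⟩
        · rw [mem_kx, smul_sub, hc2, sub_self]
        · change f (e.1 - c'.1) = f e.1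
          rw [map_sub, LinearMap.mem_ker.1 c'.2, sub_zero]
      let i1 : annSub a (LinearMap.range f1) →ₗ[R] annSub a D := ((LinearMap.range f1).subtype ∘ₗ Submodule.subtype _).codRestrict _ (by
        intro c r hr
        exact congrArg Subtype.val (c.2 r hr))
      let i2 : annSub a D →ₗ[R] LinearMap.range g := ((LinearMap.range f1).mkQ ∘ₗ Submodule.subtype _).codRestrict _ (by
        intro d
        obtain ⟨c, hc⟩ := hf d.1
        refine ⟨⟨c, ?_⟩, ?_⟩
        · change f (x • c) = 0
          rw [map_smul, hc]
          exact d.2 x hxa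
        · change (LinearMap.range f1).mkQ (f c) = _
          rw [hc]; rfl)
      refine finite_of_exact i1 i2 ?_ h1 h2
      intro d
      constructor
      · intro hd
        have := (Submodule.Quotient.mk_eq_zero _).1 (congrArg Subtype.val hd)
        exact ⟨⟨⟨d.1, this⟩, fun r hr => Subtype.ext (d.2 r hr)⟩, rfl⟩
      · rintro ⟨e, rfl⟩
        exact Subtype.ext ((Submodule.Quotient.mk_eq_zero _).2 e.1.2)

lemma A1p [IsNoetherianRing R] (a : Ideal R) {C : Type u} [AddCommGroup C] [Module R C] [IsArtinian R C]
    {D : Type u} [AddCommGroup D] [Module R D] (f : C →ₗ[R] D) (hf : Function.Surjective f)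
    (h : Module.Finite R (annSub a C)) : Module.Finite R (annSub a D) := 
  A1p_aux a ⊥ bot_le C D f hf (by
    intro r hr c
    rw [(Ideal.mem_bot.1 hr), zero_smul]) h
end secD7

section ffD8
variable {R : Type u} [CommRing R]

/-- modules which are finitely generated up to support in `Z` -/
def FF (Z : Set (PrimeSpectrum R)) (N : Type u) [AddCommGroup N] [Module R N] : Prop :=
  ∃ L : Submodule R N, L.FG ∧ ∀ p ∉ Z, ∀ x : N, ∃ r ∉ p.asIdeal, r • x ∈ L

/-- next layer -/
def Zn (Z : Set (PrimeSpectrum R)) : Set (PrimeSpectrum R) := {p | ∀ q, p < q → q ∈ Z}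

lemma FF_of_finite (Z : Set (PrimeSpectrum R)) (N : Type u) [AddCommGroup N] [Module R N] (h : Module.Finite R N) : FF Z N :=
  ⟨⊤, h.1, fun p _ _ => ⟨1, fun h => p.isPrime.ne_top ((Ideal.eq_top_iff_one _).2 h), trivial⟩⟩

lemma finite_of_FF (N : Type u) [AddCommGroup N] [Module R N] (h : FF (∅ : Set (PrimeSpectrum R)) N) : Module.Finite R N := by
  obtain ⟨L, hL, h⟩ := h
  refine ⟨?_⟩
  convert hL
  symm
  rw [eq_top_iff]
  intro x _
  let J : Ideal R := L.comap (LinearMap.toSpanSingleton R N x)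
  by_cases hJ : J = ⊤
  · have : (1 : R) ∈ J := hJ ▸ trivial
    have h1 : (1 : R) • x ∈ L := this
    rwa [one_smul] at h1
  · obtain ⟨m, hm, hJm⟩ := Ideal.exists_le_maximal J hJ
    obtain ⟨r, hr, hrx⟩ := h ⟨m, hm.isPrime⟩ (by simp) x
    exact absurd (hJm hrx) hr

lemma FF_exact [IsNoetherianRing R] (Z : Set (PrimeSpectrum R)) {A B C : Type u} [AddCommGroup A] [Module R A] [AddCommGroup B] [Module R B]
    [AddCommGroup C] [Module R C] (f : A →ₗ[R] B) (g : B →ₗ[R] C) (h : Function.Exact f g)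
    (hA : FF Z A) (hC : FF Z C) : FF Z B := by
  obtain ⟨LA, fA, hA⟩ := hA
  obtain ⟨LC, fC, hC⟩ := hC
  have : IsNoetherian R LC := isNoetherian_of_fg_of_noetherian LC fC
  have hfg : (LC ⊓ LinearMap.range g).FG := by
    have h1 : ((LinearMap.range g).comap LC.subtype).FG := IsNoetherian.noetherian _
    have h2 := h1.map LC.subtype
    rwa [Submodule.map_comap_subtype] at h2
  have : ∃ L' : Submodule R B, L'.FG ∧ L'.map g = LC ⊓ LinearMap.range g := by
    obtain ⟨s, hs⟩ := hfg
    have : ∀ y : s, ∃ b, g b = y := fun y => (hs ▸ Submodule.subset_span y.2 : y.1 ∈ LC ⊓ LinearMap.range g).2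
    choose b hb using this
    refine ⟨Submodule.span R (Set.range b), Submodule.fg_span (Set.finite_range b), ?_⟩
    rw [Submodule.map_span, ← Set.range_comp, ← hs]
    congr 1
    ext y
    constructor
    · rintro ⟨z, rfl⟩
      simp [hb]
    · intro hy
      exact ⟨⟨y, hy⟩, hb _⟩
  obtain ⟨L', fL', hL'⟩ := this
  refine ⟨LA.map f ⊔ L', (fA.map f).sup fL', ?_⟩
  intro p hp x
  obtain ⟨r, hr, hrx⟩ := hC p hp (g x)
  have h1 : r • g x ∈ L'.map g := by
    rw [hL']
    exact ⟨hrx, r • x, map_smul _ _ _⟩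
  obtain ⟨l, hl, hlx⟩ := h1
  obtain ⟨y, hy⟩ := (h (r • x - l)).1 (by rw [map_sub, hlx, map_smul, sub_self])
  obtain ⟨s, hs, hsy⟩ := hA p hp y
  refine ⟨s * r, fun h => (p.isPrime.mem_or_mem h).elim hs hr, ?_⟩
  have : (s * r) • x = f (s • y) + s • l := by
    rw [map_smul, hy, smul_sub, mul_smul, sub_add_cancel]
  rw [this]
  exact Submodule.add_mem_sup ⟨_, hsy, rfl⟩ (L'.smul_mem _ hl)

lemma FF_sub [IsNoetherianRing R] (Z : Set (PrimeSpectrum R)) {A B : Type u} [AddCommGroup A] [Module R A] [AddCommGroup B] [Module R B]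
    (f : A →ₗ[R] B) (hf : Function.Injective f) (h : FF Z B) : FF Z A :=
  FF_exact Z (0 : PUnit.{u+1} →ₗ[R] A) f (by
    intro x
    constructor
    · intro hx
      exact ⟨0, by rw [(injective_iff_map_eq_zero f).1 hf x hx]; rfl⟩
    · rintro ⟨y, rfl⟩
      exact map_zero f) (FF_of_finite Z _ inferInstance) h

lemma FF_quo [IsNoetherianRing R] (Z : Set (PrimeSpectrum R)) {A B : Type u} [AddCommGroup A] [Module R A] [AddCommGroup B] [Module R B]
    (f : A →ₗ[R] B) (hf : Function.Surjective f) (h : FF Z A) : FF Z B :=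
  FF_exact Z f (0 : B →ₗ[R] PUnit.{u+1}) (fun x => ⟨fun _ => hf x, fun _ => rfl⟩) h (FF_of_finite Z _ inferInstance)

lemma FF_mono {Z Z' : Set (PrimeSpectrum R)} (hZ : Z ⊆ Z') {A : Type u} [AddCommGroup A] [Module R A] (h : FF Z A) : FF Z' A := by
  obtain ⟨L, hL, h⟩ := h
  exact ⟨L, hL, fun p hp => h p (fun h => hp (hZ h))⟩

lemma FF_pi [IsNoetherianRing R] (Z : Set (PrimeSpectrum R)) {A : Type u} [AddCommGroup A] [Module R A] (h : FF Z A) :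
    FF Z (A × A) := FF_exact Z (LinearMap.inl R A A) (LinearMap.snd R A A) Function.Exact.inl_snd h h

lemma artin_of_supp [IsNoetherianRing R] (N : Type u) [AddCommGroup N] [Module R N] (hfin : Module.Finite R N)
    (h : ∀ p ∈ Module.support R N, p.asIdeal.IsMaximal) : IsArtinian R N := by
  induction hfin using IsNoetherianRing.induction_on_isQuotientEquivQuotientPrime R with
  | subsingleton N => 
    have : Finite N := inferInstance
    exact isArtinian_of_finite
  | quotient N p f =>
    have h1 : p.asIdeal.IsMaximal := by
      apply h
      rw [f.support_eq, Module.mem_support_iff_of_finite, Ideal.annihilator_quotient]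
    have h2 : IsArtinian R (R ⧸ p.asIdeal) := by
      have : IsSimpleModule R (R ⧸ p.asIdeal) := isSimpleModule_iff_isCoatom.2 (Ideal.isMaximal_def.1 h1)
      infer_instance
    exact isArtinian_of_linearEquiv f.symm
  | exact N₁ N₂ N₃ f g hf hg hfg h₁ h₃ =>
    have := h₁ (fun p hp => h p (Module.support_subset_of_injective f hf hp))
    have := h₃ (fun p hp => h p (Module.support_subset_of_surjective g hg hp))
    exact isArtinian_of_range_eq_ker f g (LinearMap.exact_iff.1 hfg).symm

section loc
variable (S : Submonoid R)

lemma loc_fg (N : Type u) [AddCommGroup N] [Module R N] (h : Module.Finite (Localization S) (LocalizedModule S N)) :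
    ∃ L : Submodule R N, L.FG ∧ ∀ x : N, ∃ s ∈ S, s • x ∈ L := by
  obtain ⟨t, ht⟩ := h.1
  have : ∀ y : t, ∃ m : N, ∃ s : S, LocalizedModule.mk m s = y.1 := by
    intro y
    obtain ⟨⟨m, s⟩, h⟩ : ∃ q : N × S, LocalizedModule.mk q.1 q.2 = y.1 := by
      generalize y.1 = z
      induction z with
      | h m s => exact ⟨(m, s), rfl⟩
    exact ⟨m, s, h⟩
  choose m s hms using this
  refine ⟨Submodule.span R (Set.range m), Submodule.fg_span (Set.finite_range m), fun x => ?_⟩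
  have h1 : LocalizedModule.mk x 1 ∈ (Submodule.span R (Set.range m)).localized S := by
    have : (⊤ : Submodule (Localization S) (LocalizedModule S N)) ≤ (Submodule.span R (Set.range m)).localized S := by
      rw [← ht, Submodule.span_le]
      intro y hy
      refine ⟨m ⟨y, hy⟩, Submodule.subset_span ⟨_, rfl⟩, s ⟨y, hy⟩, ?_⟩
      rw [← IsLocalizedModule.mk_eq_mk', hms]
    exact this trivial
  obtain ⟨y, hy, s', h2⟩ := h1
  rw [← IsLocalizedModule.mk_eq_mk', LocalizedModule.mk_eq] at h2
  obtain ⟨u, hu⟩ := h2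
  refine ⟨u * s', mul_mem u.2 s'.2, ?_⟩
  rw [one_smul] at hu
  have : (u.1 * s'.1) • x = u.1 • y := by
    rw [mul_smul]; exact hu.symm
  rw [this]
  exact Submodule.smul_mem _ _ hy

lemma mem_annSub_loc (a : Ideal R) (N : Type u) [AddCommGroup N] [Module R N] (x : LocalizedModule S N) :
    x ∈ annSub (a.map (algebraMap R (Localization S))) (LocalizedModule S N) ↔ ∀ r ∈ a, r • x = 0 := by
  constructor
  · intro h r hr
    have := h _ (Ideal.mem_map_of_mem _ hr)
    rwa [algebraMap_smul] at this
  · intro h r hr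
    induction hr using Submodule.span_induction with
    | mem r hr => 
      obtain ⟨r, hr, rfl⟩ := hr
      rw [algebraMap_smul]
      exact h r hr
    | zero => exact zero_smul _ _
    | add r s _ _ h1 h2 => rw [add_smul, h1, h2, add_zero]
    | smul r s _ h1 => rw [smul_assoc, h1, smul_zero]

lemma fin_kill (I : Ideal R) (hI : I.FG) (N : Type u) [AddCommGroup N] [Module R N] (c : N)
    (h : ∀ r ∈ I, ∃ s ∈ S, s • r • c = 0) : ∃ s ∈ S, ∀ r ∈ I, s • r • c = 0 := by
  obtain ⟨t, ht⟩ := hI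
  have : ∀ r : t, ∃ s ∈ S, s • r.1 • c = 0 := fun r => h r.1 (ht ▸ Ideal.subset_span r.2)
  choose s hs h1 using this
  refine ⟨∏ r, s r, prod_mem (fun r _ => hs r), ?_⟩
  intro r hr
  rw [← ht] at hr
  induction hr using Submodule.span_induction with
  | mem r hr => 
    obtain ⟨k, hk⟩ := Finset.dvd_prod_of_mem s (Finset.mem_univ (⟨r, hr⟩ : t))
    rw [hk, mul_comm, mul_smul, h1 ⟨r, hr⟩, smul_zero]
  | zero => rw [zero_smul, smul_zero]
  | add r s _ _ h1 h2 => rw [add_smul, smul_add, h1, h2, add_zero]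
  | smul r s _ h1 => rw [smul_assoc, smul_comm, h1, smul_zero]

lemma lift_ann [IsNoetherianRing R] (a : Ideal R) (N : Type u) [AddCommGroup N] [Module R N] (x : LocalizedModule S N) 
    (hx : x ∈ annSub (a.map (algebraMap R (Localization S))) (LocalizedModule S N)) :
    ∃ m ∈ annSub a N, ∃ s : S, x = LocalizedModule.mk m s := by
  rw [mem_annSub_loc] at hx
  induction x with
  | h m s =>
    obtain ⟨t, ht, h1⟩ := fin_kill S a (IsNoetherian.noetherian _) N m (by
      intro r hr
      have := hx r hr
      rw [LocalizedModule.smul'_mk, ← LocalizedModule.zero_mk s, LocalizedModule.mk_eq] at this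
      obtain ⟨u, hu⟩ := this
      rw [smul_zero, smul_zero] at hu
      refine ⟨u * s, mul_mem u.2 s.2, ?_⟩
      rw [mul_smul]
      exact hu)
    refine ⟨t • m, ?_, ⟨t, ht⟩ * s, ?_⟩
    · intro r hr
      rw [smul_comm]
      exact h1 r hr
    · rw [LocalizedModule.mk_eq]
      refine ⟨1, ?_⟩
      rw [one_smul, one_smul]
      change (t * s.1) • m = s.1 • t • m
      rw [smul_smul, mul_comm]
end loc
end ffD8

section coreD9
variable {R : Type u} [CommRing R]

/-- complement of the union of a set of primes -/
def cpl (W : Set (PrimeSpectrum R)) : Submonoid R where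
  carrier := {s | ∀ p ∈ W, s ∉ p.asIdeal}
  one_mem' := fun p _ h => p.isPrime.ne_top ((Ideal.eq_top_iff_one _).2 h)
  mul_mem' := fun hx hy p hp h => (p.isPrime.mem_or_mem h).elim (hx p hp) (hy p hp)

lemma cpl_avoid {W : Set (PrimeSpectrum R)} (hW : W.Finite) (J : Ideal R) (h : ∀ p ∈ W, ¬ J ≤ p.asIdeal) : ∃ s ∈ cpl W, s ∈ J := by
  by_cases hJ : J ≤ ⊥
  · exact ⟨0, fun p hp => absurd (hJ.trans bot_le) (h p hp), zero_mem _⟩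
  · obtain ⟨x, hx, _, h1⟩ := avoid J ⊥ W hW hJ h
    exact ⟨x, h1, hx⟩

lemma cpl_sub {W : Set (PrimeSpectrum R)} (hW : W.Finite) {N : Type u} [AddCommGroup N] [Module R N] (L : Submodule R N)
    (x : N) (h : ∀ p ∈ W, ∃ r ∉ p.asIdeal, r • x ∈ L) : ∃ s ∈ cpl W, s • x ∈ L := by
  obtain ⟨s, hs, h1⟩ := cpl_avoid hW (L.comap (LinearMap.toSpanSingleton R N x)) (by
    intro p hp hle
    obtain ⟨r, hr, hrx⟩ := h p hp
    exact hr (hle hrx))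
  exact ⟨s, hs, h1⟩

variable [IsNoetherianRing R] (Z : Set (PrimeSpectrum R)) (a : Ideal R) (C : Type u) [AddCommGroup C] [Module R C]

/-- if L0 is not supported at p then C is not -/
lemma tors_supp (ht : ∀ c : C, ∃ n : ℕ, ∀ r ∈ a ^ n, r • c = 0) (p : PrimeSpectrum R) (L : Submodule R (annSub a C))
    (h1 : ∀ x : annSub a C, ∃ r ∉ p.asIdeal, r • x ∈ L) (h2 : p ∉ Module.support R L) : p ∉ Module.support R C := by
  rw [Module.notMem_support_iff'] at h2 ⊢
  have key : ∀ n : ℕ, ∀ c : C, (∀ r ∈ a ^ n, r • c = 0) → ∃ r ∉ p.asIdeal, r • c = 0 := by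
    intro n
    induction n with
    | zero =>
      intro c hc
      refine ⟨1, fun h => p.isPrime.ne_top ((Ideal.eq_top_iff_one _).2 h), hc 1 (by simp)⟩
    | succ n ih =>
      intro c hc
      obtain ⟨s, hs, h3⟩ := fin_kill p.asIdeal.primeCompl (a ^ n) (IsNoetherian.noetherian _) C c (by
        intro r hr
        have hv : r • c ∈ annSub a C := by
          intro t ht
          rw [smul_smul]
          exact hc _ (by rw [pow_succ']; exact Ideal.mul_mem_mul ht hr)
        obtain ⟨s1, hs1, h4⟩ := h1 ⟨r • c, hv⟩
        obtain ⟨s2, hs2, h5⟩ := h2 ⟨_, h4⟩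
        refine ⟨s2 * s1, mul_mem hs2 hs1, ?_⟩
        rw [mul_smul]
        exact congrArg (fun t => t.1.1) h5)
      obtain ⟨r, hr, h4⟩ := ih (s • c) (by
        intro r hr
        rw [smul_comm]
        exact h3 r hr)
      exact ⟨r * s, fun h => (p.isPrime.mem_or_mem h).elim hr hs, by rw [mul_smul, h4]⟩
  intro c
  obtain ⟨n, hn⟩ := ht c
  exact key n c hn

lemma core (ht : ∀ c : C, ∃ n : ℕ, ∀ r ∈ a ^ n, r • c = 0) (hsupp : Module.support R C ⊆ Zn Z) (hV : FF Z (annSub a C)) :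
    ∃ S : Submonoid R, IsArtinian (Localization S) (LocalizedModule S C) ∧ 
      Module.Finite (Localization S) (annSub (a.map (algebraMap R (Localization S))) (LocalizedModule S C)) ∧
      ∀ (D : Type u) [AddCommGroup D] [Module R D], Module.support R D ⊆ Module.support R C → 
        Module.Finite (Localization S) (LocalizedModule S D) → FF Z D := by
  obtain ⟨L, hL, hVL⟩ := hV
  let W := Module.support R C \ Z
  have hLfin : Module.Finite R L := Module.Finite.iff_fg.2 hL
  have hLsup : Module.support R L ⊆ Module.support R C := 
    Module.support_subset_of_injective ((annSub a C).subtype ∘ₗ L.subtype) (fun x y h => Subtype.ext (Subtype.ext h))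
  have hW : W.Finite := by
    have hfin := (Module.annihilator R L).finite_minimalPrimes_of_isNoetherianRing R
    refine (hfin.preimage (f := PrimeSpectrum.asIdeal) (fun p _ q _ h => PrimeSpectrum.ext h)).subset ?_
    rintro p ⟨hp, hpZ⟩
    have h1 : p ∈ Module.support R L := by
      by_contra hcon
      exact tors_supp a C ht p L (hVL p hpZ) hcon hp
    rw [Module.mem_support_iff_of_finite] at h1
    obtain ⟨q, hq, hqp⟩ := Ideal.exists_minimalPrimes_le h1
    have hqpr : q.IsPrime := hq.1.1
    have h2 : (⟨q, hqpr⟩ : PrimeSpectrum R) ∈ Module.support R L := by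
      rw [Module.mem_support_iff_of_finite]; exact hq.1.2
    have h3 := hsupp (hLsup h2)
    have h4 : (⟨q, hqpr⟩ : PrimeSpectrum R) = p := by
      by_contra hne
      exact hpZ (h3 p (lt_of_le_of_ne hqp hne))
    rw [← h4]
    exact hq
  let S := cpl W
  have hNR : IsNoetherianRing (Localization S) := IsLocalization.isNoetherianRing S (Localization S) inferInstance
  have hfinV : Module.Finite (Localization S) (annSub (a.map (algebraMap R (Localization S))) (LocalizedModule S C)) := by
    have : Module.Finite (Localization S) (LocalizedModule S L) := inferInstance
    let g := LocalizedModule.map S ((annSub a C).subtype ∘ₗ L.subtype)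
    have hle : annSub (a.map (algebraMap R (Localization S))) (LocalizedModule S C) ≤ LinearMap.range g := by
      intro x hx
      obtain ⟨m, hm, s, rfl⟩ := lift_ann S a C x hx
      obtain ⟨s', hs', h1⟩ := cpl_sub hW L ⟨m, hm⟩ (fun p hp => hVL p hp.2 _)
      refine ⟨LocalizedModule.mk ⟨_, h1⟩ (⟨s', hs'⟩ * s), ?_⟩
      rw [LocalizedModule.map_mk, LocalizedModule.mk_eq]
      refine ⟨1, ?_⟩
      rw [one_smul, one_smul]
      change s.1 • s' • m = (s' * s.1) • m
      rw [smul_smul, mul_comm]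
    have : IsNoetherian (Localization S) (LinearMap.range g) := isNoetherian_of_isNoetherianRing_of_finite _ _
    exact Module.Finite.of_injective (Submodule.inclusion hle) (Submodule.inclusion_injective hle)
  refine ⟨S, ?_, hfinV, ?_⟩
  rotate_left
  · intro D _ _ hDC hD
    obtain ⟨L, hL, h⟩ := loc_fg S D hD
    refine ⟨L, hL, ?_⟩
    intro p hpZ x
    by_cases hp : p ∈ W
    · obtain ⟨s, hs, h1⟩ := h x
      exact ⟨s, hs p hp, h1⟩
    · have : p ∉ Module.support R D := fun h => hp ⟨hDC h, hpZ⟩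
      rw [Module.notMem_support_iff'] at this
      obtain ⟨r, hr, h1⟩ := this x
      exact ⟨r, hr, h1 ▸ zero_mem _⟩
  · apply artin_of_ann (a.map (algebraMap R (Localization S)))
    · intro c
      induction c with
      | h m s =>
        obtain ⟨n, hn⟩ := ht m
        refine ⟨n, ?_⟩
        rw [← Ideal.map_pow]
        apply (mem_annSub_loc S (a ^ n) C _).2
        intro r hr
        rw [LocalizedModule.smul'_mk, hn r hr, LocalizedModule.zero_mk]
    · apply artin_of_supp _ hfinV
      intro P hP
      rw [Module.mem_support_iff_exists_annihilator] at hP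
      obtain ⟨v, hv⟩ := hP
      obtain ⟨c, s, hcs⟩ : ∃ c s, LocalizedModule.mk c s = v.1 := by
        generalize v.1 = z
        induction z with
        | h m s => exact ⟨m, s, rfl⟩
      let p : PrimeSpectrum R := PrimeSpectrum.comap (algebraMap R (Localization S)) P
      have hpC : p ∈ Module.support R C := by
        rw [Module.mem_support_iff_exists_annihilator]
        refine ⟨c, ?_⟩
        intro r hr
        rw [Submodule.mem_annihilator_span_singleton] at hr
        apply hv
        rw [Submodule.mem_annihilator_span_singleton]
        apply Subtype.ext
        change algebraMap R (Localization S) r • v.1 = 0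
        rw [← hcs, algebraMap_smul, LocalizedModule.smul'_mk, hr, LocalizedModule.zero_mk]
      obtain ⟨Q, hQ, hPQ⟩ := Ideal.exists_le_maximal P.asIdeal P.isPrime.ne_top
      let Q' : PrimeSpectrum (Localization S) := ⟨Q, hQ.isPrime⟩
      let q : PrimeSpectrum R := PrimeSpectrum.comap (algebraMap R (Localization S)) Q'
      have hpq : p ≤ q := fun x hx => hPQ hx
      have : ∃ w ∈ W, q ≤ w := by
        by_contra hcon
        push Not at hcon
        obtain ⟨s, hs, hsq⟩ := cpl_avoid hW q.asIdeal hcon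
        exact hQ.ne_top (Ideal.eq_top_of_isUnit_mem _ hsq (IsLocalization.map_units (Localization S) (⟨s, hs⟩ : S)))
      obtain ⟨w, hw, hqw⟩ := this
      have hpw : p = w := by
        by_contra hne
        exact hw.2 (hsupp hpC w (lt_of_le_of_ne (hpq.trans hqw) hne))
      have hpq' : p = q := le_antisymm hpq (hpw ▸ hqw)
      have hPQ' : P = Q' := PrimeSpectrum.localization_comap_injective (Localization S) S hpq'
      rw [hPQ']
      exact hQ

variable {C}
lemma A1core (ht : ∀ c : C, ∃ n : ℕ, ∀ r ∈ a ^ n, r • c = 0) (hsupp : Module.support R C ⊆ Zn Z) (hV : FF Z (annSub a C))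
    {D : Type u} [AddCommGroup D] [Module R D] (f : C →ₗ[R] D) (hf : Function.Surjective f) : FF Z (annSub a D) := by
  obtain ⟨S, h1, h2, h3⟩ := core Z a C ht hsupp hV
  have hNR : IsNoetherianRing (Localization S) := IsLocalization.isNoetherianRing S (Localization S) inferInstance
  apply h3
  · exact (Module.support_subset_of_injective (annSub a D).subtype Subtype.val_injective).trans (Module.support_subset_of_surjective f hf)
  · have h4 := A1p (a.map (algebraMap R (Localization S))) (LocalizedModule.map S f) (LocalizedModule.map_surjective S f hf) h2
    have : IsNoetherian (Localization S) (annSub (a.map (algebraMap R (Localization S))) (LocalizedModule S D)) :=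
      isNoetherian_of_isNoetherianRing_of_finite _ _
    let g : LocalizedModule S (annSub a D) →ₗ[Localization S] annSub (a.map (algebraMap R (Localization S))) (LocalizedModule S D) :=
      (LocalizedModule.map S (annSub a D).subtype).codRestrict _ (by
        intro x
        rw [mem_annSub_loc]
        induction x with
        | h m s =>
          intro r hr
          rw [LocalizedModule.map_mk, LocalizedModule.smul'_mk]
          have : r • (annSub a D).subtype m = 0 := m.2 r hr
          rw [this, LocalizedModule.zero_mk])
    have hg : Function.Injective g := fun x y h =>
      LocalizedModule.map_injective S (annSub a D).subtype Subtype.val_injective (congrArg Subtype.val h)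
    exact Module.Finite.of_injective g hg

lemma A2core (ht : ∀ c : C, ∃ n : ℕ, ∀ r ∈ a ^ n, r • c = 0) (hsupp : Module.support R C ⊆ Zn Z) (hV : FF Z (annSub a C)) :
    ∃ W : Set (PrimeSpectrum R), W.Finite ∧ (∀ p ∈ W, ¬ a ≤ p.asIdeal) ∧
      ∀ x ∈ a, (∀ p ∈ W, x ∉ p.asIdeal) → FF Z (C ⧸ xN x C) := by
  obtain ⟨S, h1, h2, h3⟩ := core Z a C ht hsupp hV
  have hNR : IsNoetherianRing (Localization S) := IsLocalization.isNoetherianRing S (Localization S) inferInstance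
  obtain ⟨W, hW, hWa, h4⟩ := A2p (a.map (algebraMap R (Localization S))) (LocalizedModule S C) h2
  refine ⟨PrimeSpectrum.comap (algebraMap R (Localization S)) '' W, hW.image _, ?_, ?_⟩
  · rintro _ ⟨P, hP, rfl⟩ hle
    exact hWa P hP (Ideal.map_le_iff_le_comap.2 hle)
  · intro x hx hxW
    have h5 := h4 (algebraMap R (Localization S) x) (Ideal.mem_map_of_mem _ hx) (fun P hP => hxW _ ⟨P, hP, rfl⟩)
    apply h3
    · exact Module.support_subset_of_surjective (xN x C).mkQ (Submodule.mkQ_surjective _)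
    · let g := (xN (algebraMap R (Localization S) x) (LocalizedModule S C)).liftQ (LocalizedModule.map S (xN x C).mkQ) (by
        rintro _ ⟨y, rfl⟩
        rw [LinearMap.mem_ker]
        induction y with
        | h m s =>
          change (LocalizedModule.map S (xN x C).mkQ) (algebraMap R (Localization S) x • LocalizedModule.mk m s) = 0
          rw [algebraMap_smul, LocalizedModule.smul'_mk, LocalizedModule.map_mk]
          have : (xN x C).mkQ (x • m) = 0 := (Submodule.Quotient.mk_eq_zero _).2 ⟨m, rfl⟩
          rw [this, LocalizedModule.zero_mk])
      refine Module.Finite.of_surjective g ?_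
      intro y
      obtain ⟨z, rfl⟩ := LocalizedModule.map_surjective S (xN x C).mkQ (Submodule.mkQ_surjective _) y
      exact ⟨Submodule.Quotient.mk z, rfl⟩
end coreD9

section ssD10
variable {R : Type u} [CommRing R]

/-- torsion -/
def Tor' (a : Ideal R) (N : Type u) [AddCommGroup N] [Module R N] : Prop := ∀ x ∈ a, ∀ c : N, ∃ n : ℕ, x ^ n • c = 0

lemma Tor'.pow [IsNoetherianRing R] {a : Ideal R} {N : Type u} [AddCommGroup N] [Module R N] (h : Tor' a N) (c : N) :
    ∃ n : ℕ, ∀ r ∈ a ^ n, r • c = 0 := by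
  have h1 : a ≤ (Submodule.span R {c}).annihilator.radical := by
    intro x hx
    obtain ⟨n, hn⟩ := h x hx c
    exact ⟨n, (Submodule.mem_annihilator_span_singleton _ _).2 hn⟩
  obtain ⟨n, hn⟩ := Ideal.exists_pow_le_of_le_radical_of_fg h1 (IsNoetherian.noetherian _)
  exact ⟨n, fun r hr => (Submodule.mem_annihilator_span_singleton _ _).1 (hn hr)⟩

lemma Tor'.exact {a : Ideal R} {A B C : Type u} [AddCommGroup A] [Module R A] [AddCommGroup B] [Module R B]
    [AddCommGroup C] [Module R C] (f : A →ₗ[R] B) (g : B →ₗ[R] C) (h : Function.Exact f g)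
    (hA : Tor' a A) (hC : Tor' a C) : Tor' a B := by
  intro x hx b
  obtain ⟨n, hn⟩ := hC x hx (g b)
  obtain ⟨y, hy⟩ := (h (x ^ n • b)).1 (by rw [map_smul, hn])
  obtain ⟨k, hk⟩ := hA x hx y
  exact ⟨k + n, by rw [pow_add, mul_smul, ← hy, ← map_smul, hk, map_zero]⟩

lemma Tor'.quo {a : Ideal R} {A B : Type u} [AddCommGroup A] [Module R A] [AddCommGroup B] [Module R B]
    (f : A →ₗ[R] B) (hf : Function.Surjective f) (hA : Tor' a A) : Tor' a B := by
  intro x hx b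
  obtain ⟨y, rfl⟩ := hf b
  obtain ⟨k, hk⟩ := hA x hx y
  exact ⟨k, by rw [← map_smul, hk, map_zero]⟩

lemma Tor'.sub {a : Ideal R} {A B : Type u} [AddCommGroup A] [Module R A] [AddCommGroup B] [Module R B]
    (f : A →ₗ[R] B) (hf : Function.Injective f) (hB : Tor' a B) : Tor' a A := by
  intro x hx y
  obtain ⟨k, hk⟩ := hB x hx (f y)
  exact ⟨k, hf (by rw [map_smul, hk, map_zero])⟩

/-- the class S_e -/
structure SS (Z : Set (PrimeSpectrum R)) (a : Ideal R) (N : Type u) [AddCommGroup N] [Module R N] : Prop where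
  tor : Tor' a N
  ff : FF (Zn Z) N
  an : FF Z (annSub a N)

/-- functoriality of annSub -/
def annMap (a : Ideal R) {A B : Type u} [AddCommGroup A] [Module R A] [AddCommGroup B] [Module R B] (f : A →ₗ[R] B) :
   annSub a A →ₗ[R] annSub a B := (f ∘ₗ (annSub a A).subtype).codRestrict _ (by
    intro c r hr
    change r • f c.1 = 0
    rw [← map_smul, c.2 r hr, map_zero])

lemma annMap_inj (a : Ideal R) {A B : Type u} [AddCommGroup A] [Module R A] [AddCommGroup B] [Module R B] (f : A →ₗ[R] B)
   (hf : Function.Injective f) : Function.Injective (annMap a f) := 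
  fun _ _ h => Subtype.ext (hf (congrArg Subtype.val h))

variable [IsNoetherianRing R] {Z : Set (PrimeSpectrum R)} {a : Ideal R}

lemma FF_pow (Z : Set (PrimeSpectrum R)) {A B : Type u} [AddCommGroup A] [Module R A] [AddCommGroup B] [Module R B]
   (h : Module.Finite R B) (s : Finset R) (g : A →ₗ[R] (s → B)) 
   (hk : FF Z (LinearMap.ker g)) : FF Z A :=
  FF_exact Z (LinearMap.ker g).subtype g (LinearMap.exact_subtype_ker_map g) hk (FF_of_finite Z _ inferInstance)

lemma SS.reduce {C : Type u} [AddCommGroup C] [Module R C] (h : SS Z a C) : ∃ L : Submodule R C, L.FG ∧ 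
    Module.support R (C ⧸ L) ⊆ Zn Z ∧ FF Z (annSub a (C ⧸ L)) := by
  obtain ⟨L, hL, h1⟩ := h.ff
  refine ⟨L, hL, ?_, ?_⟩
  · intro p hp
    by_contra hcon
    revert hp
    rw [imp_false, Module.notMem_support_iff']
    intro q
    obtain ⟨c, rfl⟩ := Submodule.Quotient.mk_surjective _ q
    obtain ⟨r, hr, hrc⟩ := h1 p hcon c
    exact ⟨r, hr, (Submodule.Quotient.mk_eq_zero _).2 hrc⟩
  · obtain ⟨s, hs⟩ := (IsNoetherian.noetherian a)
    let E : Submodule R C := (annSub a (C ⧸ L)).comap L.mkQ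
    have hE : ∀ e ∈ E, ∀ r ∈ a, r • e ∈ L := fun e he r hr => (Submodule.Quotient.mk_eq_zero _).1 (he r hr)
    let g : E →ₗ[R] (s → L) := LinearMap.pi (fun x => 
      ((LinearMap.lsmul R C x.1) ∘ₗ Submodule.subtype _).codRestrict _ (by
        intro e
        exact hE e.1 e.2 x.1 (hs ▸ Ideal.subset_span x.2)))
    have hEF : FF Z E := by
      apply FF_pow Z (Module.Finite.iff_fg.2 hL) s g
      refine FF_sub Z ((E.subtype ∘ₗ (LinearMap.ker g).subtype).codRestrict (annSub a C) ?_)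
         (fun x y h => Subtype.ext (Subtype.ext (congrArg (fun t => t.1) h))) h.an
      intro c r hr
      change r • c.1.1 = 0
      rw [← hs] at hr
      induction hr using Submodule.span_induction with
      | mem r hr => exact congrArg Subtype.val (congrFun c.2 ⟨r, hr⟩)
      | zero => exact zero_smul _ _
      | add r s _ _ h1 h2 => rw [add_smul, h1, h2, add_zero]
      | smul r s _ h1 => rw [smul_assoc, h1, smul_zero]
    refine FF_quo Z ((L.mkQ ∘ₗ E.subtype).codRestrict (annSub a (C ⧸ L)) (fun e => e.2)) ?_ hEF
    rintro ⟨q, hq⟩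
    obtain ⟨c, rfl⟩ := Submodule.Quotient.mk_surjective _ q
    exact ⟨⟨c, hq⟩, rfl⟩

lemma SS.quo {C : Type u} [AddCommGroup C] [Module R C] (h : SS Z a C)
    {D : Type u} [AddCommGroup D] [Module R D] (f : C →ₗ[R] D) (hf : Function.Surjective f) : SS Z a D := by
  refine ⟨h.tor.quo f hf, FF_quo _ f hf h.ff, ?_⟩
  obtain ⟨L, hL, h1, h2⟩ := h.reduce
  have h3 := A1core Z a (Tor'.pow (h.tor.quo L.mkQ (Submodule.mkQ_surjective _))) h1 h2 
    (L.mapQ (L.map f) f (Submodule.le_comap_map f L)) (by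
      intro q
      obtain ⟨d, rfl⟩ := Submodule.Quotient.mk_surjective _ q
      obtain ⟨c, rfl⟩ := hf d
      exact ⟨Submodule.Quotient.mk c, rfl⟩)
  have hfg : (L.map f).FG := hL.map f
  have : IsNoetherian R (L.map f) := isNoetherian_of_fg_of_noetherian _ hfg
  refine FF_exact Z (annMap a (L.map f).subtype) (annMap a (L.map f).mkQ) ?_ 
    (FF_of_finite Z _ (Module.Finite.iff_fg.2 (IsNoetherian.noetherian _))) h3
  intro d
  constructor
  · intro hd
    have : d.1 ∈ L.map f := (Submodule.Quotient.mk_eq_zero _).1 (congrArg Subtype.val hd)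
    exact ⟨⟨⟨d.1, this⟩, fun r hr => Subtype.ext (d.2 r hr)⟩, rfl⟩
  · rintro ⟨e, rfl⟩
    exact Subtype.ext ((Submodule.Quotient.mk_eq_zero _).2 e.1.2)

lemma SS.good {C : Type u} [AddCommGroup C] [Module R C] (h : SS Z a C) :
    ∃ W : Set (PrimeSpectrum R), W.Finite ∧ (∀ p ∈ W, ¬ a ≤ p.asIdeal) ∧
      ∀ x ∈ a, (∀ p ∈ W, x ∉ p.asIdeal) → FF Z (C ⧸ xN x C) := by
  obtain ⟨L, hL, h1, h2⟩ := h.reduce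
  obtain ⟨W, hW, hWa, h3⟩ := A2core Z a (Tor'.pow (h.tor.quo L.mkQ (Submodule.mkQ_surjective _))) h1 h2
  refine ⟨W, hW, hWa, fun x hx hxW => ?_⟩
  let g : (C ⧸ xN x C) →ₗ[R] ((C ⧸ L) ⧸ xN x (C ⧸ L)) := (xN x C).mapQ (xN x (C ⧸ L)) L.mkQ (by
    rintro _ ⟨y, rfl⟩
    exact ⟨L.mkQ y, rfl⟩)
  refine FF_exact Z ((xN x C).mkQ ∘ₗ L.subtype) g ?_ (FF_of_finite Z _ (Module.Finite.iff_fg.2 hL)) (h3 x hx hxW)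
  intro q
  obtain ⟨c, rfl⟩ := Submodule.Quotient.mk_surjective _ q
  constructor
  · intro hq
    obtain ⟨y, hy⟩ := (Submodule.Quotient.mk_eq_zero _).1 hq
    obtain ⟨y, rfl⟩ := Submodule.Quotient.mk_surjective _ y
    have h4 : x • y - c ∈ L := (Submodule.Quotient.eq L).1 hy
    refine ⟨⟨c - x • y, by rw [← neg_sub]; exact neg_mem h4⟩, ?_⟩
    refine (Submodule.Quotient.eq _).2 ?_
    refine ⟨-y, ?_⟩
    change x • -y = c - x • y - c
    rw [smul_neg]; abel
  · rintro ⟨l, hl⟩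
    rw [← hl]
    change Submodule.Quotient.mk (Submodule.Quotient.mk l.1) = _
    rw [(Submodule.Quotient.mk_eq_zero L).2 l.2]
    exact (Submodule.Quotient.mk_eq_zero _).2 (zero_mem _)

lemma SS.sub {A B : Type u} [AddCommGroup A] [Module R A] [AddCommGroup B] [Module R B]
    (f : A →ₗ[R] B) (hf : Function.Injective f) (h : SS Z a B) : SS Z a A :=
  ⟨h.tor.sub f hf, FF_sub _ f hf h.ff, FF_sub _ (annMap a f) (annMap_inj a f hf) h.an⟩

lemma SS.exact {A B C : Type u} [AddCommGroup A] [Module R A] [AddCommGroup B] [Module R B]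
    [AddCommGroup C] [Module R C] (f : A →ₗ[R] B) (g : B →ₗ[R] C) (h : Function.Exact f g)
    (hA : SS Z a A) (hC : SS Z a C) : SS Z a B := by
  refine ⟨Tor'.exact f g h hA.tor hC.tor, FF_exact _ f g h hA.ff hC.ff, ?_⟩
  have h1 := hA.quo f.rangeRestrict f.surjective_rangeRestrict
  refine FF_exact Z (annMap a (LinearMap.range f).subtype) (annMap a g) ?_ h1.an hC.an
  intro d
  constructor
  · intro hd
    have : d.1 ∈ LinearMap.range f := (h d.1).1 (congrArg Subtype.val hd)
    exact ⟨⟨⟨d.1, this⟩, fun r hr => Subtype.ext (d.2 r hr)⟩, rfl⟩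
  · rintro ⟨e, rfl⟩
    exact Subtype.ext ((h e.1.1).2 e.1.2)

lemma SS_of_finite {A : Type u} [AddCommGroup A] [Module R A] (h : Module.Finite R A) (ht : Tor' a A) : SS Z a A :=
  have : IsNoetherian R A := isNoetherian_of_isNoetherianRing_of_finite R A
  ⟨ht, FF_of_finite _ _ h, FF_of_finite _ _ (Module.Finite.iff_fg.2 (IsNoetherian.noetherian _))⟩

lemma SS_of_subsingleton {A : Type u} [AddCommGroup A] [Module R A] (_ : Subsingleton A) : SS Z a A :=
  SS_of_finite inferInstance (fun _ _ _ => ⟨0, Subsingleton.elim _ _⟩)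

variable (J : Cx R)

lemma rig_down (x : R) (hx : x ∈ a) (n : ℤ) (h : SS Z a ((Cx.K x J).H n)) (hF : FF (Zn Z) (J.H n)) (ht : Tor' a (J.H n)) : SS Z a (J.H n) := by
  refine ⟨ht, hF, ?_⟩
  have h1 := h.quo (Cx.kout x J n).rangeRestrict (LinearMap.surjective_rangeRestrict _)
  refine FF_sub Z ((Submodule.inclusion (p := annSub a (J.H n)) (p' := LinearMap.range (Cx.kout x J n)) ?_).codRestrict (annSub a _) ?_)
      ?_ h1.an
  · intro c hc
    refine (Cx.exact3 x J n c).1 ?_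
    rw [Cx.mulx_apply]
    exact hc x hx
  · intro c r hr
    exact Subtype.ext (c.2 r hr)
  · intro y z hyz
    exact Subtype.ext (congrArg (fun t => t.1.1) hyz)

lemma rig (n : ℤ) (hz : ∀ i > n, Subsingleton (J.H i)) (l : List R) : (∀ x ∈ l, x ∈ a) → (∀ m, m <:+ l → ∀ i, Tor' a ((J.Y m).H i)) →
     (∀ m, m <:+ l → ∀ i ≥ n, FF (Zn Z) ((J.Y m).H i)) → SS Z a ((J.Y l).H n) → ∀ m, m <:+ l → ∀ i ≥ n, SS Z a ((J.Y m).H i) := by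
  induction l with
  | nil =>
    intro _ _ _ h m hm i hi
    rw [List.suffix_nil] at hm
    subst hm
    rcases hi.lt_or_eq with h1 | h1
    · exact SS_of_subsingleton (hz i h1)
    · rw [← h1]; exact h
  | cons x l ih =>
    intro hxa ht hF h m hm i hi
    have hl : l <:+ x :: l := List.suffix_cons x l
    have h1 : SS Z a ((J.Y l).H n) := rig_down (J.Y l) x (hxa x (by simp)) n h (hF l hl n le_rfl) (ht l hl n)
    have h2 := ih (fun y hy => hxa y (by simp [hy])) (fun m hm => ht m (hm.trans hl)) (fun m hm => hF m (hm.trans hl)) h1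
    rcases List.suffix_cons_iff.1 hm with rfl | hm
    · rcases hi.lt_or_eq with h3 | h3
      · exact SS.exact (Cx.kin x (J.Y l) i) (Cx.kout x (J.Y l) i) (Cx.exact2 x (J.Y l) i) (h2 l (List.suffix_refl l) _ (by omega)) 
          (h2 l (List.suffix_refl l) _ hi)
      · rw [← h3]; exact h
    · exact h2 m hm i hi
end ssD10

section finD11
variable {R : Type u} [CommRing R]

/-- layers of the spectrum -/
def Ze (R : Type u) [CommRing R] : ℕ → Set (PrimeSpectrum R)
  | 0 => ∅
  | e + 1 => Zn (Ze R e)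

lemma Ze_chain (M : Type u) [AddCommGroup M] [Module R M] (n : ℕ) : ∀ p ∈ Module.support R M, p ∉ Ze R (n+1) →
    ∃ s : LTSeries (Module.support R M), s.length = n + 1 ∧ s.head.1 = p := by
  induction n with
  | zero =>
    intro p hp h
    have : ∃ q, p < q := by
      by_contra hcon
      push Not at hcon
      exact h (fun q hq => absurd hq (hcon q))
    obtain ⟨q, hq⟩ := this
    have hq' : q ∈ Module.support R M := Module.mem_support_mono hq.le hp
    let s : LTSeries (Module.support R M) := RelSeries.singleton _ ⟨q, hq'⟩
    exact ⟨s.cons ⟨p, hp⟩ hq, rfl, rfl⟩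
  | succ n ih =>
    intro p hp h
    have : ∃ q, p < q ∧ q ∉ Ze R (n+1) := by
      by_contra hcon
      push Not at hcon
      exact h (fun q hq => hcon q hq)
    obtain ⟨q, hq, hqn⟩ := this
    have hq' : q ∈ Module.support R M := Module.mem_support_mono hq.le hp
    obtain ⟨s, hs, hsq⟩ := ih q hq' hqn
    refine ⟨s.cons ⟨p, hp⟩ ?_, ?_, ?_⟩
    · change p < s.head.1
      rw [hsq]; exact hq
    · simp [hs]
    · simp

lemma supp_Ze (M : Type u) [AddCommGroup M] [Module R M] (h : Order.krullDim (Module.support R M) ≤ 2) :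
    Module.support R M ⊆ Ze R 3 := by
  intro p hp
  by_contra hn
  obtain ⟨s, hs, -⟩ := Ze_chain M 2 p hp hn
  have := (Order.LTSeries.length_le_krullDim s).trans h
  rw [hs] at this
  norm_num at this

lemma FF_supp (M : Type u) [AddCommGroup M] [Module R M] (Z : Set (PrimeSpectrum R)) (h : Module.support R M ⊆ Z) : FF Z M := by
  refine ⟨⊥, Submodule.fg_bot, fun p hp x => ?_⟩
  obtain ⟨r, hr, hrx⟩ := (Module.notMem_support_iff'.1 (fun hs => hp (h hs))) x
  exact ⟨r, hr, hrx⟩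

variable [IsNoetherianRing R]
variable {a : Ideal R} {J : Cx R}

lemma Y_tor (h : ∀ i, Tor' a (J.H i)) (m : List R) : ∀ i, Tor' a ((J.Y m).H i) := by
  induction m with
  | nil => exact h
  | cons x m ih =>
    intro i
    exact Tor'.exact (Cx.kin x (J.Y m) i) (Cx.kout x (J.Y m) i) (Cx.exact2 x (J.Y m) i) (ih _) (ih _)

lemma Y_FF {Z : Set (PrimeSpectrum R)} (h : ∀ i, FF Z (J.H i)) (m : List R) : ∀ i, FF Z ((J.Y m).H i) := by
  induction m with
  | nil => exact h
  | cons x m ih =>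
    intro i
    exact FF_exact Z (Cx.kin x (J.Y m) i) (Cx.kout x (J.Y m) i) (Cx.exact2 x (J.Y m) i) (ih _) (ih _)

lemma Y_sub (h : ∀ i ≥ 1, Subsingleton (J.H i)) (m : List R) : ∀ i ≥ (m.length : ℤ) + 1, Subsingleton ((J.Y m).H i) := by
  induction m with
  | nil => intro i hi; exact h i (by simpa using hi)
  | cons x m ih =>
    intro i hi
    have hi' : i ≥ (m.length : ℤ) + 1 + 1 := by simpa using hi
    have h1 := ih (i-1) (by omega)
    have h2 := ih i (by omega)
    refine ⟨fun u v => ?_⟩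
    have : ∀ w : (Cx.K x (J.Y m)).H i, w = 0 := by
      intro w
      obtain ⟨y, hy⟩ := (Cx.exact2 x (J.Y m) i w).1 (Subsingleton.elim _ _)
      rw [← hy, Subsingleton.elim y 0, map_zero]
    exact (this u).trans (this v).symm

/-- the level condition -/
def Lv (J : Cx R) (j : ℕ) (m : List R) : Prop :=
  ∀ j' ≤ j, ∀ m', m' <:+ m → ∀ i ≥ (j' : ℤ), FF (Ze R (3 - j')) ((J.Y m').H i)

lemma cone_FF {Z : Set (PrimeSpectrum R)} (x : R) (J : Cx R) (i : ℤ) (h1 : FF Z (J.H (i-1) ⧸ xN x (J.H (i-1))))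
    (h2 : FF Z (J.H i)) : FF Z ((Cx.K x J).H i) := by
  have hle : xN x (J.H (i-1)) ≤ LinearMap.ker (Cx.kin x J i) := by
    intro y hy
    obtain ⟨z, hz⟩ := mem_xN.1 hy
    refine (Cx.exact1 x J i y).2 ⟨z, ?_⟩
    rw [Cx.mulx_apply]
    exact hz
  refine FF_exact Z (Submodule.liftQ _ (Cx.kin x J i) hle) (Cx.kout x J i) ?_ h1 h2
  intro w
  rw [Cx.exact2 x J i w]
  constructor
  · rintro ⟨y, rfl⟩
    exact ⟨Submodule.Quotient.mk y, rfl⟩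
  · rintro ⟨y, rfl⟩
    obtain ⟨y, rfl⟩ := Submodule.Quotient.mk_surjective _ y
    exact ⟨y, rfl⟩

lemma rig_k (hz : ∀ i ≥ 1, Subsingleton (J.H i)) (ht : ∀ i, Tor' a (J.H i))
    (k : ℕ) (hk : k ≤ 2) (l : List R) (hla : ∀ x ∈ l, x ∈ a) (hL : Lv J k l)
    (hf : Module.Finite R ((J.Y l).H k)) :
    ∀ m, m <:+ l → ∀ i ≥ (k:ℤ), SS (Ze R (2-k)) a ((J.Y m).H i) := by
  refine rig J k (fun i hi => hz i (by omega)) l hla (fun m _ i => Y_tor ht m i) ?_ (SS_of_finite hf (Y_tor ht l k))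
  intro m hm i hi
  have := hL k le_rfl m hm i hi
  rwa [show 3 - k = (2 - k) + 1 by omega] at this

/-- extension claim -/
def Claim (J : Cx R) (a : Ideal R) (j : ℕ) : Prop :=
  ∀ m : List R, (∀ x ∈ m, x ∈ a) → Lv J j m → ∃ p : List R, (∀ x ∈ p ++ m, x ∈ a) ∧ Lv J j (p ++ m) ∧
    Ideal.span {x | x ∈ p ++ m} = a

lemma one_step (hz : ∀ i ≥ 1, Subsingleton (J.H i)) (ht : ∀ i, Tor' a (J.H i)) (hF : ∀ i, FF (Ze R 3) (J.H i))
    (hfin : ∀ l : List R, Ideal.span {x | x ∈ l} = a → ∀ i ≤ (2:ℤ), Module.Finite R ((J.Y l).H i))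
    (j : ℕ) (hj : j + 1 ≤ 2) (hC : ∀ k ≤ j, Claim J a k) (m : List R) (hm : ∀ x ∈ m, x ∈ a)
    (hL : Lv J (j+1) m) (hne : ¬ a ≤ Ideal.span {x | x ∈ m}) :
    ∃ x ∈ a, x ∉ Ideal.span {x | x ∈ m} ∧ Lv J (j+1) (x :: m) := by
  have hSS : ∀ k ≤ j, ∀ i ≥ (k:ℤ), SS (Ze R (2-k)) a ((J.Y m).H i) := by
    intro k hk i hi
    obtain ⟨p, h1, h2, h3⟩ := hC k hk m hm (fun j' hj' => hL j' (by omega))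
    exact rig_k hz ht k (by omega) _ h1 h2 (hfin _ h3 k (by omega)) m (List.suffix_append _ _) i hi
  have hW : ∀ q : ℕ × ℕ, ∃ W : Set (PrimeSpectrum R), W.Finite ∧ (∀ p ∈ W, ¬ a ≤ p.asIdeal) ∧
      (q.1 ≤ j → q.1 ≤ q.2 → ∀ x ∈ a, (∀ p ∈ W, x ∉ p.asIdeal) →
        FF (Ze R (2-q.1)) ((J.Y m).H (q.2 : ℤ) ⧸ xN x ((J.Y m).H (q.2:ℤ)))) := by
    rintro ⟨k, i⟩
    by_cases hki : k ≤ j ∧ k ≤ i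
    · obtain ⟨W, h1, h2, h3⟩ := (hSS k hki.1 i (by exact_mod_cast hki.2)).good
      exact ⟨W, h1, h2, fun _ _ => h3⟩
    · exact ⟨∅, Set.finite_empty, by simp, fun h1 h2 => absurd ⟨h1, h2⟩ hki⟩
  choose W hW1 hW2 hW3 using hW
  let S : Finset (ℕ × ℕ) := Finset.range (j+1) ×ˢ Finset.range (m.length + 1)
  obtain ⟨x, hxa, hxm, hx⟩ := avoid a (Ideal.span {x | x ∈ m}) (⋃ q ∈ S, W q)
    (S.finite_toSet.biUnion (fun q _ => hW1 q)) hne (by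
      intro p hp
      simp only [Set.mem_iUnion] at hp
      obtain ⟨q, _, hq⟩ := hp
      exact hW2 q p hq)
  refine ⟨x, hxa, hxm, ?_⟩
  have key : ∀ k ≤ j, ∀ i ≥ (k:ℤ), FF (Ze R (2-k)) ((J.Y m).H i ⧸ xN x ((J.Y m).H i)) := by
    intro k hk i hi
    by_cases hil : i ≥ (m.length : ℤ) + 1
    · have := Y_sub hz m i hil
      exact FF_of_finite _ _ inferInstance
    · obtain ⟨i, rfl⟩ := Int.eq_ofNat_of_zero_le (show 0 ≤ i by omega)
      refine hW3 (k, i) hk (by exact_mod_cast hi) x hxa (fun p hp => hx p ?_)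
      simp only [Set.mem_iUnion]
      refine ⟨(k, i), ?_, hp⟩
      simp only [S, Finset.mem_product, Finset.mem_range]
      omega
  intro j' hj' m' hm' i hi
  rcases List.suffix_cons_iff.1 hm' with rfl | hm'
  · rcases j' with _ | k
    · exact Y_FF hF _ i
    · refine cone_FF x (J.Y m) i ?_ (hL (k+1) hj' m (List.suffix_refl m) i hi)
      have := key k (by omega) (i-1) (by push_cast at hi; omega)
      rwa [show 3 - (k+1) = 2 - k by omega]
  · exact hL j' hj' m' hm' i hi

lemma claim_all (hz : ∀ i ≥ 1, Subsingleton (J.H i)) (ht : ∀ i, Tor' a (J.H i)) (hF : ∀ i, FF (Ze R 3) (J.H i))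
    (hfin : ∀ l : List R, Ideal.span {x | x ∈ l} = a → ∀ i ≤ (2:ℤ), Module.Finite R ((J.Y l).H i))
    (j : ℕ) : j ≤ 2 → Claim J a j := by
  induction j using Nat.strong_induction_on with
  | _ j ih =>
  intro hj
  rcases j with _ | j
  · intro m hm _
    obtain ⟨s, hs⟩ := (IsNoetherian.noetherian a : a.FG)
    refine ⟨s.toList, ?_, ?_, ?_⟩
    · intro x hx
      rcases List.mem_append.1 hx with hx | hx
      · rw [← hs]; exact Submodule.subset_span (Finset.mem_toList.1 hx)
      · exact hm x hx
    · intro j' hj' m' _ i _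
      obtain rfl : j' = 0 := by omega
      exact Y_FF hF _ i
    · apply le_antisymm
      · rw [Ideal.span_le]
        intro x hx
        rcases List.mem_append.1 hx with hx | hx
        · rw [← hs]; exact Submodule.subset_span (Finset.mem_toList.1 hx)
        · exact hm x hx
      · conv_lhs => rw [← hs]
        exact Submodule.span_mono (fun x hx => List.mem_append_left _ (Finset.mem_toList.2 hx))
  · have main : ∀ I : Ideal R, ∀ m : List R, Ideal.span {x | x ∈ m} = I → (∀ x ∈ m, x ∈ a) → Lv J (j+1) m →
        ∃ p : List R, (∀ x ∈ p ++ m, x ∈ a) ∧ Lv J (j+1) (p ++ m) ∧ Ideal.span {x | x ∈ p ++ m} = a := by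
      intro I
      induction I using WellFoundedGT.induction with
      | _ I ihI =>
      intro m hmI hm hL
      by_cases hne : a ≤ Ideal.span {x | x ∈ m}
      · exact ⟨[], hm, hL, le_antisymm (Ideal.span_le.2 hm) hne⟩
      · obtain ⟨x, hxa, hxm, hLx⟩ := one_step hz ht hF hfin j hj (fun k hk => ih k (by omega) (by omega)) m hm hL hne
        obtain ⟨p, h1, h2, h3⟩ := ihI (Ideal.span {y | y ∈ x :: m}) (by
            rw [← hmI]
            refine lt_of_le_of_ne (Ideal.span_mono (fun y hy => List.mem_cons_of_mem _ hy)) (fun h => hxm ?_)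
            rw [h]
            exact Ideal.subset_span List.mem_cons_self) (x :: m) rfl (by
            intro y hy
            rcases List.mem_cons.1 hy with rfl | hy
            · exact hxa
            · exact hm y hy) hLx
        refine ⟨p ++ [x], ?_⟩
        rw [List.append_assoc]
        exact ⟨h1, h2, h3⟩
    intro m
    exact main _ m rfl

lemma final_mod (M : ModuleCat.{u} R) (htM : Tor' a M) (hdim : Order.krullDim (Module.support R M) ≤ 2)
    (hE : ∀ i ≤ 2, Module.Finite R (EE a i M)) (n : ℕ) : Module.Finite R (EE a n M) := by
  obtain ⟨J, hneg, hac, hex, ⟨e⟩⟩ := exists_resCx a M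
  have hz : ∀ i ≥ 1, Subsingleton (J.H i) := by
    intro i hi
    have h0 : ∀ q : J.H i, q = 0 := by
      intro q
      obtain ⟨z, rfl⟩ := Submodule.Quotient.mk_surjective _ q
      refine (SQ_mk_eq_zero (B := J.B i) z).2 ?_
      rw [hex i hi]; exact z.2
    exact ⟨fun u v => (h0 u).trans (h0 v).symm⟩
  have hzn : ∀ i < 0, Subsingleton (J.H i) := by
    intro i hi
    have h0 : ∀ q : J.H i, q = 0 := by
      intro q
      obtain ⟨z, rfl⟩ := Submodule.Quotient.mk_surjective _ q
      refine (SQ_mk_eq_zero (B := J.B i) z).2 ?_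
      have : z.1 ∈ J.X i := z.2.2
      rw [hneg i hi] at this
      rw [(Submodule.mem_bot R).1 this]
      exact zero_mem _
    exact ⟨fun u v => (h0 u).trans (h0 v).symm⟩
  let f : M →ₗ[R] J.H 0 := (J.zpr 0) ∘ₗ e.toLinearMap
  have hf : Function.Surjective f := (J.zpr_sur 0).comp e.surjective
  have ht : ∀ i, Tor' a (J.H i) := by
    intro i
    rcases lt_trichotomy i 0 with h | rfl | h
    · have := hzn i h
      exact fun _ _ _ => ⟨0, Subsingleton.elim _ _⟩
    · exact htM.quo f hf
    · have := hz i h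
      exact fun _ _ _ => ⟨0, Subsingleton.elim _ _⟩
  have hF : ∀ i, FF (Ze R 3) (J.H i) := by
    intro i
    rcases lt_trichotomy i 0 with h | rfl | h
    · have := hzn i h
      exact FF_of_finite _ _ inferInstance
    · exact FF_quo _ f hf (FF_supp M _ (supp_Ze M hdim))
    · have := hz i h
      exact FF_of_finite _ _ inferInstance
  have hfin : ∀ l : List R, Ideal.span {x | x ∈ l} = a → ∀ i ≤ (2:ℤ), Module.Finite R ((J.Y l).H i) := by
    intro l hl
    exact (koszul_link hneg hac hex e l hl 2).2 hE
  obtain ⟨l, h1, h2, h3⟩ := claim_all hz ht hF hfin 2 le_rfl [] (by simp) (by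
    intro j' hj' m' hm' i hi
    rw [List.suffix_nil.1 hm']
    rcases j' with _ | k
    · exact hF i
    · have := hz i (by push_cast at hi; omega)
      have h5 : FF (Ze R (3 - (k+1))) (J.H i) := FF_of_finite _ _ inferInstance
      exact h5)
  rw [List.append_nil] at h1 h2 h3
  have hSS := rig_k hz ht 2 le_rfl l h1 h2 (hfin l h3 2 (by norm_num)) l (List.suffix_refl l)
  refine (koszul_link hneg hac hex e l h3 n).1 ?_ n le_rfl
  intro i _
  by_cases hi : i ≤ 2
  · exact hfin l h3 i hi
  · have h4 : Module.Finite R (annSub a ((J.Y l).H i)) := finite_of_FF _ ((hSS i (by push_cast; omega)).an)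
    refine Module.Finite.of_surjective (annSub a ((J.Y l).H i)).subtype ?_
    intro q
    exact ⟨⟨q, Cx.Y_kill l h3 i q⟩, rfl⟩

end finD11

theorem stmt0 {R : Type u} [CommRing R] [IsNoetherianRing R] (a : Ideal R)
    (M : ModuleCat.{u} R)
    (htor : ∀ m : M, ∃ n : ℕ, ∀ r ∈ a ^ n, r • m = 0)
    (hdim : Order.krullDim (Module.support R M) ≤ 2) :
    IsCofinite a M ↔
      (Module.Finite R (extQuot a 0 M) ∧ Module.Finite R (extQuot a 1 M) ∧
        Module.Finite R (extQuot a 2 M)) := by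
  constructor
  · intro h
    exact ⟨h.2 0, h.2 1, h.2 2⟩
  · rintro ⟨h0, h1, h2⟩
    refine ⟨?_, fun i => ?_⟩
    · intro p hp
      obtain ⟨m, hm⟩ := Module.mem_support_iff'.1 hp
      obtain ⟨n, hn⟩ := htor m
      intro r hr
      by_contra hrp
      exact hm (r ^ n) (fun h => hrp (p.isPrime.mem_of_pow_mem n h)) (hn _ (Ideal.pow_mem_pow hr n))
    · rw [extQuot_finite_iff]
      refine final_mod M ?_ hdim ?_ i
      · intro x hx c
        obtain ⟨n, hn⟩ := htor c
        exact ⟨n, hn _ (Ideal.pow_mem_pow hx n)⟩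
      · intro i hi
        refine (extQuot_finite_iff a M i).1 ?_
        interval_cases i
        · exact h0
        · exact h1
        · exact h2
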